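/- arXiv:math/0701309 — 11 statements merged into one kernel-verified Lean document; each statement's English description precedes it below -/
import Mathlib

section
/- The set of orphans O := {a ∈ A | for all b ∈ A, ε(a·b) = 0} is a differential ideal of (A,d): it is a linear subspace, it is closed under multiplication by arbitrary elements of A, and d(O) ⊆ O. -/
namespace PDCDGA

variable {k : Type} [Field k]

/-- Graded commutativity with Koszul signs, together with the convention that
squares of odd-degree elements vanish (also in characteristic 2). -/
structure GradedComm {A : Type} [Ring A] [Algebra k A] (𝒜 : ℕ → Submodule k A) : Prop where
  mul_comm : ∀ (i j : ℕ) (a b : A), a ∈ 𝒜 i → b ∈ 𝒜 j →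
    a * b = ((-1 : k) ^ (i * j)) • (b * a)
  odd_sq : ∀ i : ℕ, Odd i → ∀ a ∈ 𝒜 i, a * a = 0

/-- A `k`-linear differential of degree `+1` satisfying the graded Leibniz rule. -/
structure IsDifferential {A : Type} [Ring A] [Algebra k A] (𝒜 : ℕ → Submodule k A)
    (d : A →ₗ[k] A) : Prop where
  grade : ∀ i : ℕ, ∀ a ∈ 𝒜 i, d a ∈ 𝒜 (i + 1)
  d_sq : ∀ a : A, d (d a) = 0
  leibniz : ∀ (i : ℕ) (a b : A), a ∈ 𝒜 i →
    d (a * b) = d a * b + ((-1 : k) ^ i) • (a * d b)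

/-- An orientation `ε : A → k`, concentrated in degree `n`, vanishing on boundaries
and inducing an epimorphism `Hⁿ(A) → k`. -/
structure IsOrientation {A : Type} [Ring A] [Algebra k A] (𝒜 : ℕ → Submodule k A)
    (d : A →ₗ[k] A) (n : ℕ) (ε : A →ₗ[k] k) : Prop where
  homog : ∀ i : ℕ, i ≠ n → ∀ a ∈ 𝒜 i, ε a = 0
  eps_d : ∀ a : A, ε (d a) = 0
  exists_cocycle : ∃ μ : A, μ ∈ 𝒜 n ∧ d μ = 0 ∧ ε μ = 1

/-- The orphan ideal `O = {a | ∀ b, ε (a·b) = 0}` (as a `k`-submodule). -/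
def Orphans {A : Type} [Ring A] [Algebra k A] (ε : A →ₗ[k] k) : Submodule k A :=
  ⨅ b : A, LinearMap.ker (ε ∘ₗ LinearMap.mulRight k b)

lemma mem_orphans {A : Type} [Ring A] [Algebra k A] (ε : A →ₗ[k] k) (a : A) :
    a ∈ Orphans ε ↔ ∀ b : A, ε (a * b) = 0 := by
  simp [Orphans]

/-- `H^*(A,d)` is a Poincaré duality algebra in dimension `n` with respect to the
orientation `ε`: every nonzero cohomology class pairs nontrivially with some class
in the complementary degree. -/
def CohomologyPD {A : Type} [Ring A] [Algebra k A] (𝒜 : ℕ → Submodule k A)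
    (d : A →ₗ[k] A) (n : ℕ) (ε : A →ₗ[k] k) : Prop :=
  ∀ (i : ℕ) (a : A), a ∈ 𝒜 i → d a = 0 → a ∉ LinearMap.range d →
    ∃ (j : ℕ) (b : A), i + j = n ∧ b ∈ 𝒜 j ∧ d b = 0 ∧ ε (a * b) ≠ 0

/-- The orphan ideal is `N`-half-acyclic: `Hⁱ(O) = 0` for `n/2 + 1 ≤ i ≤ N`
(the condition `n/2 + 1 ≤ i` is written as `n + 2 ≤ 2 * i`). -/
def OrphansHalfAcyclic {A : Type} [Ring A] [Algebra k A] (𝒜 : ℕ → Submodule k A)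
    (d : A →ₗ[k] A) (n : ℕ) (ε : A →ₗ[k] k) (N : ℕ) : Prop :=
  ∀ i : ℕ, n + 2 ≤ 2 * i → i ≤ N → ∀ a : A, a ∈ Orphans ε → a ∈ 𝒜 i → d a = 0 →
    ∃ b : A, b ∈ Orphans ε ∧ b ∈ 𝒜 (i - 1) ∧ a = d b

/-- A chain map is a quasi-isomorphism: it induces a bijection on cohomology. -/
def IsQuasiIso {A B : Type} [Ring A] [Algebra k A] [Ring B] [Algebra k B]
    (d : A →ₗ[k] A) (D : B →ₗ[k] B) (f : A → B) : Prop :=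
  (∀ a : A, d a = 0 → (∃ b : B, f a = D b) → ∃ a' : A, a = d a') ∧
  (∀ x : B, D x = 0 → ∃ (a : A) (b : B), d a = 0 ∧ x = f a + D b)

/-- Indices of the monomial basis of `Λ(c₁,…,c_l,w₁,…,w_l)`, where `c_i` has degree
`q+1` and `w_i` has degree `q`: exponents of odd-degree generators are at most 1. -/
def MonIdx (q l : ℕ) : Type :=
  {se : (Fin l → ℕ) × (Fin l → ℕ) //
    (Odd (q + 1) → ∀ i, se.1 i ≤ 1) ∧ (Odd q → ∀ i, se.2 i ≤ 1)}

/-- The monomial `c₁^{s₁} ⋯ c_l^{s_l} · w₁^{e₁} ⋯ w_l^{e_l}`. -/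
def monomial {B : Type} [Monoid B] {l : ℕ} (c w : Fin l → B)
    (μ : (Fin l → ℕ) × (Fin l → ℕ)) : B :=
  (((List.finRange l).map fun i => c i ^ μ.1 i).prod) *
    (((List.finRange l).map fun i => w i ^ μ.2 i).prod)

lemma eps_component {k A : Type} [Field k] [Ring A] [Algebra k A]
    (𝒜 : ℕ → Submodule k A) [GradedRing 𝒜] (n : ℕ) (ε : A →ₗ[k] k)
    (hhom : ∀ i : ℕ, i ≠ n → ∀ a ∈ 𝒜 i, ε a = 0)
    (i j : ℕ) (hij : i + j = n) (b : A) (hb : b ∈ 𝒜 j) (a : A) :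
    ε (a * b) = ε ((DirectSum.decompose 𝒜 a i : A) * b) := by
  induction a using DirectSum.Decomposition.inductionOn 𝒜 with
  | zero => simp
  | @homogeneous l m =>
    by_cases h : l = i
    · subst h
      rw [DirectSum.decompose_of_mem_same 𝒜 m.2]
    · rw [DirectSum.decompose_of_mem_ne 𝒜 m.2 h, zero_mul, map_zero]
      exact hhom (l + j) (by omega) _ (SetLike.mul_mem_graded m.2 hb)
  | add x y hx hy =>
    simp only [add_mul, map_add, DirectSum.decompose_add, DirectSum.add_apply,
      Submodule.coe_add, hx, hy]

/-- Homogeneous components of an orphan are orphans. -/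
lemma orphan_component {k A : Type} [Field k] [Ring A] [Algebra k A]
    (𝒜 : ℕ → Submodule k A) [GradedRing 𝒜] (n : ℕ) (ε : A →ₗ[k] k)
    (hhom : ∀ i : ℕ, i ≠ n → ∀ a ∈ 𝒜 i, ε a = 0)
    (a : A) (ha : ∀ b, ε (a * b) = 0) (i : ℕ) (b : A) :
    ε ((DirectSum.decompose 𝒜 a i : A) * b) = 0 := by
  induction b using DirectSum.Decomposition.inductionOn 𝒜 with
  | zero => simp
  | @homogeneous j m =>
    by_cases h : i + j = n
    · rw [← eps_component 𝒜 n ε hhom i j h m m.2 a, ha]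
    · exact hhom (i + j) h _ (SetLike.mul_mem_graded (SetLike.coe_mem _) m.2)
  | add x y hx hy => rw [mul_add, map_add, hx, hy, add_zero]

lemma eps_boundary {k A : Type} [Field k] [Ring A] [Algebra k A]
    (𝒜 : ℕ → Submodule k A) [GradedRing 𝒜]
    (d : A →ₗ[k] A) (n : ℕ) (ε : A →ₗ[k] k) (hd : IsDifferential 𝒜 d)
    (hhom : ∀ i : ℕ, i ≠ n → ∀ a ∈ 𝒜 i, ε a = 0)
    (hεd : ∀ a ∈ 𝒜 (n - 1), ε (d a) = 0) (a : A) : ε (d a) = 0 := by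
  induction a using DirectSum.Decomposition.inductionOn 𝒜 with
  | zero => simp
  | @homogeneous j m =>
    by_cases h : j + 1 = n
    · subst h
      exact hεd _ m.2
    · exact hhom _ h _ (hd.grade j _ m.2)
  | add x y hx hy => rw [map_add, map_add, hx, hy, add_zero]

/-- the set of orphans is a differential ideal of `(A,d)`:
it contains `0`, is closed under addition, scalar multiplication, multiplication
by arbitrary elements of `A`, and under the differential. -/
theorem orphans_differential_ideal {k A : Type} [Field k] [Ring A] [Algebra k A]
    (𝒜 : ℕ → Submodule k A) [GradedRing 𝒜]
    (d : A →ₗ[k] A) (n : ℕ) (ε : A →ₗ[k] k)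
    (hgc : GradedComm 𝒜) (hd : IsDifferential 𝒜 d)
    (hhom : ∀ i : ℕ, i ≠ n → ∀ a ∈ 𝒜 i, ε a = 0)
    (hεd : ∀ a ∈ 𝒜 (n - 1), ε (d a) = 0) :
    ((∀ b : A, ε ((0 : A) * b) = 0) ∧
     (∀ a a' : A, (∀ b, ε (a * b) = 0) → (∀ b, ε (a' * b) = 0) →
       ∀ b, ε ((a + a') * b) = 0) ∧
     (∀ (r : k) (a : A), (∀ b, ε (a * b) = 0) → ∀ b, ε ((r • a) * b) = 0)) ∧
    (∀ a x : A, (∀ b, ε (a * b) = 0) →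
      (∀ b, ε ((a * x) * b) = 0) ∧ (∀ b, ε ((x * a) * b) = 0)) ∧
    (∀ a : A, (∀ b, ε (a * b) = 0) → ∀ b, ε (d a * b) = 0) := by
  classical
  refine ⟨⟨by simp, ?_, ?_⟩, ?_, ?_⟩
  · intro a a' ha ha' b
    rw [add_mul, map_add, ha, ha', add_zero]
  · intro r a ha b
    rw [smul_mul_assoc, map_smul, ha, smul_zero]
  · intro a x ha
    refine ⟨fun b => by rw [mul_assoc, ha], fun b => ?_⟩
    rw [← DirectSum.sum_support_decompose 𝒜 a, Finset.mul_sum, Finset.sum_mul, map_sum]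
    refine Finset.sum_eq_zero fun i _ => ?_
    induction x using DirectSum.Decomposition.inductionOn 𝒜 with
    | zero => simp
    | @homogeneous j m =>
      rw [hgc.mul_comm j i _ _ m.2 (SetLike.coe_mem _), smul_mul_assoc, map_smul, mul_assoc,
        orphan_component 𝒜 n ε hhom a ha, smul_zero]
    | add x y hx hy => rw [add_mul, add_mul, map_add, hx, hy, add_zero]
  · intro a ha b
    rw [← DirectSum.sum_support_decompose 𝒜 a, map_sum, Finset.sum_mul, map_sum]
    refine Finset.sum_eq_zero fun i _ => ?_
    have h := congrArg ε (hd.leibniz i (DirectSum.decompose 𝒜 a i : A) b (SetLike.coe_mem _))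
    rw [eps_boundary 𝒜 d n ε hd hhom hεd, map_add, map_smul,
      orphan_component 𝒜 n ε hhom a ha, smul_zero, add_zero] at h
    exact h.symm

end PDCDGA
end

section
/- If H^*(A,d) is a Poincaré duality algebra in dimension n with orientation induced by ε, then every cocycle in the orphan ideal is a coboundary: O ∩ ker d ⊆ d(A). -/
namespace PDCDGA

variable {k : Type} [Field k]

lemma proj_d {A : Type} [Ring A] [Algebra k A]
    (𝒜 : ℕ → Submodule k A) [GradedRing 𝒜] (d : A →ₗ[k] A)
    (hd : IsDifferential 𝒜 d) (i : ℕ) (a : A) :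
    d (DirectSum.decompose 𝒜 a i : A) = (DirectSum.decompose 𝒜 (d a) (i + 1) : A) := by
  induction a using DirectSum.Decomposition.inductionOn 𝒜 with
  | zero => simp
  | @homogeneous j m =>
    by_cases h : j = i
    · subst h
      rw [DirectSum.decompose_of_mem_same 𝒜 m.2,
        DirectSum.decompose_of_mem_same 𝒜 (hd.grade _ _ m.2)]
    · rw [DirectSum.decompose_of_mem_ne 𝒜 m.2 h,
        DirectSum.decompose_of_mem_ne 𝒜 (hd.grade _ _ m.2) (by omega), map_zero]
  | add x y hx hy =>
    simp only [DirectSum.decompose_add, DirectSum.add_apply, Submodule.coe_add, map_add, hx, hy]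

lemma eps_proj {A : Type} [Ring A] [Algebra k A]
    (𝒜 : ℕ → Submodule k A) [GradedRing 𝒜] (d : A →ₗ[k] A) (n : ℕ) (ε : A →ₗ[k] k)
    (hor : IsOrientation 𝒜 d n ε) (i j : ℕ) (hij : i + j = n) (b : A) (hb : b ∈ 𝒜 j) (a : A) :
    ε ((DirectSum.decompose 𝒜 a i : A) * b) = ε (a * b) := by
  induction a using DirectSum.Decomposition.inductionOn 𝒜 with
  | zero => simp
  | @homogeneous l m =>
    by_cases h : l = i
    · subst h
      rw [DirectSum.decompose_of_mem_same 𝒜 m.2]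
    · rw [DirectSum.decompose_of_mem_ne 𝒜 m.2 h, zero_mul, map_zero,
        hor.homog (l + j) (by omega) _ (SetLike.mul_mem_graded m.2 hb)]
  | add x y hx hy =>
    simp only [DirectSum.decompose_add, DirectSum.add_apply, Submodule.coe_add, map_add, add_mul,
      hx, hy]

/-- if `H^*(A,d)` is a Poincaré duality algebra in dimension `n`
with orientation `ε`, then every cocycle in the orphan ideal is a coboundary. -/
theorem orphan_cocycle_is_coboundary {k A : Type} [Field k] [Ring A] [Algebra k A]
    (𝒜 : ℕ → Submodule k A) [GradedRing 𝒜]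
    (d : A →ₗ[k] A) (n : ℕ) (ε : A →ₗ[k] k)
    (hgc : GradedComm 𝒜) (hd : IsDifferential 𝒜 d)
    (hor : IsOrientation 𝒜 d n ε) (hpd : CohomologyPD 𝒜 d n ε) :
    ∀ a : A, a ∈ Orphans ε → d a = 0 → a ∈ LinearMap.range d := by
  classical
  intro a ha hda
  rw [← DirectSum.sum_support_decompose 𝒜 a]
  refine Submodule.sum_mem _ fun i _ => ?_
  by_contra hcon
  obtain ⟨j, b, hij, hb, -, hne⟩ := hpd i _ (SetLike.coe_mem _)
    (by rw [proj_d 𝒜 d hd, hda]; simp) hcon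
  rw [eps_proj 𝒜 d n ε hor i j hij b hb] at hne
  exact hne ((mem_orphans ε a).1 ha b)

end PDCDGA
end

section
/- The quotient CDGA Ā = A/O, with the induced orientation ε̄, is an oriented differential Poincaré duality algebra: the bilinear forms Ā^i ⊗ Ā^{n-i} → k, ā⊗b̄ ↦ ε̄(āb̄) are non-degenerate. -/
namespace PDCDGA

variable {k : Type} [Field k]

/-- the quotient `Ā = A/O` with the induced orientation `ε̄` is an
oriented differential Poincaré duality algebra: `ε` vanishes on `O` (so it descends
to `Ā`), and the induced pairings `Āⁱ ⊗ Ā^{n-i} → k` are non-degenerate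
(stated on representatives: a class is nonzero iff its representative is not an orphan). -/
theorem quotient_is_differential_PD {k A : Type} [Field k] [Ring A] [Algebra k A]
    (𝒜 : ℕ → Submodule k A) [GradedRing 𝒜]
    (d : A →ₗ[k] A) (n : ℕ) (ε : A →ₗ[k] k)
    (hgc : GradedComm 𝒜) (hd : IsDifferential 𝒜 d)
    (hconn : ∀ a ∈ 𝒜 0, ∃ r : k, a = r • (1 : A))
    (hft : ∀ i : ℕ, FiniteDimensional k (𝒜 i))
    (hor : IsOrientation 𝒜 d n ε) (hpd : CohomologyPD 𝒜 d n ε) :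
    (∀ a ∈ Orphans ε, ε a = 0) ∧
    (∀ i jd : ℕ, i + jd = n → ∀ a : A, a ∈ 𝒜 i → a ∉ Orphans ε →
      ∃ b ∈ 𝒜 jd, ε (a * b) ≠ 0) ∧
    (∀ i jd : ℕ, i + jd = n → ∀ b : A, b ∈ 𝒜 jd → b ∉ Orphans ε →
      ∃ a ∈ 𝒜 i, ε (a * b) ≠ 0) := by
  have key : ∀ i jd : ℕ, i + jd = n → ∀ a : A, a ∈ 𝒜 i → a ∉ Orphans ε →
      ∃ b ∈ 𝒜 jd, ε (a * b) ≠ 0 := by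
    intro i jd hij a ha hna
    by_contra hcon
    push Not at hcon
    apply hna
    rw [mem_orphans]
    intro b
    classical
    rw [← DirectSum.sum_support_decompose 𝒜 b, Finset.mul_sum, map_sum]
    refine Finset.sum_eq_zero fun j _ => ?_
    by_cases hj : j = jd
    · subst hj
      exact hcon _ (SetLike.coe_mem _)
    · exact hor.homog (i + j) (by omega) _ (SetLike.mul_mem_graded ha (SetLike.coe_mem _))
  refine ⟨fun a ha => ?_, key, fun i jd hij b hb hnb => ?_⟩
  · simpa using (mem_orphans ε a).1 ha 1
  · obtain ⟨a, ha, hne⟩ := key jd i (by omega) b hb hnb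
    refine ⟨a, ha, ?_⟩
    rw [hgc.mul_comm i jd a b ha hb, map_smul, smul_eq_mul]
    exact mul_ne_zero (pow_ne_zero _ (neg_ne_zero.2 one_ne_zero)) hne

end PDCDGA
end

section
/- If the orphan ideal O has H^i(O,d) = 0 for all i with n/2 + 1 ≤ i ≤ n+1 (i.e. O is (n+1)-half-acyclic), then the quotient map π: A → A/O is a quasi-isomorphism. -/
namespace PDCDGA

variable {k : Type} [Field k]

section Helpers

variable {A : Type} [Ring A] [Algebra k A] {𝒜 : ℕ → Submodule k A} [GradedRing 𝒜]
  {d : A →ₗ[k] A} {n : ℕ} {ε : A →ₗ[k] k}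

open Classical in
lemma aux_sum (x : A) :
    ∑ i ∈ (DirectSum.decompose 𝒜 x).support, ((DirectSum.decompose 𝒜 x i : 𝒜 i) : A) = x :=
  DirectSum.sum_support_decompose 𝒜 x

lemma aux_decompose_d (hd : IsDifferential 𝒜 d) (x : A) (i : ℕ) :
    ((DirectSum.decompose 𝒜 (d x) (i + 1) : 𝒜 (i + 1)) : A)
      = d (DirectSum.decompose 𝒜 x i : 𝒜 i) := by
  induction x using DirectSum.Decomposition.inductionOn 𝒜 with
  | zero => simp
  | @homogeneous m a =>
    have h := hd.grade m a a.2
    by_cases hm : m = i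
    · subst hm
      rw [DirectSum.decompose_of_mem_same 𝒜 h, DirectSum.decompose_of_mem_same 𝒜 a.2]
    · rw [DirectSum.decompose_of_mem_ne 𝒜 h (by omega),
        DirectSum.decompose_of_mem_ne 𝒜 a.2 hm, map_zero]
  | add a b ha hb =>
    simp [DirectSum.decompose_add, ha, hb]

lemma aux_eps_zero (hor : IsOrientation 𝒜 d n ε) {p q : ℕ} {a b : A}
    (ha : a ∈ 𝒜 p) (hb : b ∈ 𝒜 q) (hpq : p + q ≠ n) : ε (a * b) = 0 :=
  hor.homog _ hpq _ (SetLike.mul_mem_graded ha hb)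

lemma aux_mem_orphans (hor : IsOrientation 𝒜 d n ε) {p : ℕ} {a : A} (ha : a ∈ 𝒜 p)
    (h : ∀ q : ℕ, p + q = n → ∀ b ∈ 𝒜 q, ε (a * b) = 0) : a ∈ Orphans ε := by
  rw [mem_orphans]
  intro b
  rw [← aux_sum (𝒜 := 𝒜) b, Finset.mul_sum, map_sum]
  refine Finset.sum_eq_zero fun q _ => ?_
  by_cases hpq : p + q = n
  · exact h q hpq _ (SetLike.coe_mem _)
  · exact aux_eps_zero hor ha (SetLike.coe_mem _) hpq

open Classical in
lemma aux_component (hor : IsOrientation 𝒜 d n ε) {o : A} (ho : o ∈ Orphans ε) (p : ℕ) :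
    ((DirectSum.decompose 𝒜 o p : 𝒜 p) : A) ∈ Orphans ε := by
  refine aux_mem_orphans hor (SetLike.coe_mem _) fun q hpq b hb => ?_
  have h := (mem_orphans ε o).1 ho b
  rw [← aux_sum (𝒜 := 𝒜) o, Finset.sum_mul, map_sum, Finset.sum_eq_single p] at h
  · exact h
  · intro r _ hr
    exact aux_eps_zero hor (SetLike.coe_mem _) hb (by omega)
  · intro hp
    have : DirectSum.decompose 𝒜 o p = 0 := by simpa using hp
    simp [this]

lemma aux_swap (hgc : GradedComm 𝒜) {p q : ℕ} {a b : A}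
    (ha : a ∈ 𝒜 p) (hb : b ∈ 𝒜 q) (h : ε (a * b) = 0) : ε (b * a) = 0 := by
  rw [hgc.mul_comm q p b a hb ha, map_smul, h, smul_zero]

lemma aux_exact (hor : IsOrientation 𝒜 d n ε) (hd : IsDifferential 𝒜 d)
    (hpd : CohomologyPD 𝒜 d n ε) {o : A} (ho : o ∈ Orphans ε) (hdo : d o = 0) :
    o ∈ LinearMap.range d := by
  rw [← aux_sum (𝒜 := 𝒜) o]
  refine Submodule.sum_mem _ fun p _ => ?_
  by_contra hne
  obtain ⟨j, b, -, -, -, hb⟩ := hpd p _ (SetLike.coe_mem _)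
    (by rw [← aux_decompose_d hd, hdo]; simp) hne
  exact hb ((mem_orphans ε _).1 (aux_component hor ho p) b)

lemma aux_low (hgc : GradedComm 𝒜) (hd : IsDifferential 𝒜 d)
    (hft : ∀ i : ℕ, FiniteDimensional k (𝒜 i))
    (hor : IsOrientation 𝒜 d n ε) (hpd : CohomologyPD 𝒜 d n ε)
    (hha : OrphansHalfAcyclic 𝒜 d n ε (n + 1)) {i j : ℕ} (hij : i + j = n) (h2 : n ≤ 2 * j)
    {x : A} (hx : x ∈ 𝒜 i) (hdx : d x ∈ Orphans ε) :
    x ∈ LinearMap.ker d ⊔ Orphans ε := by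
  have := hft j
  let Φ : A →ₗ[k] Module.Dual k (𝒜 j) :=
    { toFun := fun a => (ε ∘ₗ LinearMap.mulLeft k a) ∘ₗ (𝒜 j).subtype
      map_add' := fun a b => by ext u; simp [add_mul]
      map_smul' := fun r a => by ext u; simp }
  have hΦ : ∀ (a : A) (u : 𝒜 j), Φ a u = ε (a * u) := fun a u => rfl
  let S : Subspace k (Module.Dual k (𝒜 j)) := Submodule.map Φ (𝒜 i ⊓ LinearMap.ker d)
  have key : Φ x ∈ S := by
    rw [← Subspace.dualCoannihilator_dualAnnihilator_eq (W := S), Submodule.mem_dualAnnihilator]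
    intro u hu
    rw [Submodule.mem_dualCoannihilator] at hu
    have hu' : ∀ a ∈ 𝒜 i, d a = 0 → ε (a * u) = 0 := fun a ha hda =>
      hu (Φ a) ⟨a, ⟨ha, hda⟩, rfl⟩
    have hdu : d u ∈ Orphans ε := by
      refine aux_mem_orphans hor (hd.grade j u u.2) fun q hq b hb => ?_
      refine aux_swap hgc hb (hd.grade j u u.2) ?_
      have hi : i = q + 1 := by omega
      subst hi
      have h1 := hu' (d b) (hd.grade q b hb) (hd.d_sq b)
      have h3 := hor.eps_d (b * u)
      rw [hd.leibniz q b u hb, map_add, h1, zero_add, map_smul] at h3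
      exact (smul_eq_zero.1 h3).resolve_left (pow_ne_zero _ (by simp))
    obtain ⟨o, ho, hoj, hdo⟩ := hha (j + 1) (by omega) (by omega) (d u) hdu
      (hd.grade j u u.2) (hd.d_sq _)
    have hoj : o ∈ 𝒜 j := hoj
    have hao : ∀ a ∈ 𝒜 i, ε (a * o) = 0 := fun a ha =>
      aux_swap hgc hoj ha ((mem_orphans ε o).1 ho a)
    have hz : (u : A) - o ∈ 𝒜 j := Submodule.sub_mem _ u.2 hoj
    have hzr : (u : A) - o ∈ LinearMap.range d := by
      by_contra hne
      obtain ⟨i', a, hi', ha, hda, hne'⟩ := hpd j _ hz (by rw [map_sub, hdo, sub_self]) hne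
      have hi : i' = i := by omega
      subst hi
      refine hne' (aux_swap hgc ha hz ?_)
      rw [mul_sub, map_sub, hu' a ha hda, hao a ha, sub_zero]
    obtain ⟨w, hw⟩ := hzr
    have h4 := hor.eps_d (x * w)
    rw [hd.leibniz i x w hx, map_add, (mem_orphans ε _).1 hdx w, zero_add, map_smul] at h4
    have h5 := (smul_eq_zero.1 h4).resolve_left (pow_ne_zero _ (by simp))
    rw [hw, mul_sub, map_sub, hao x hx, sub_zero] at h5
    exact h5
  obtain ⟨a, ⟨ha, hda⟩, hax⟩ := key
  refine Submodule.mem_sup.2 ⟨a, hda, x - a, ?_, by abel⟩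
  refine aux_mem_orphans hor (Submodule.sub_mem _ hx ha) fun q hq b hb => ?_
  have hj : q = j := by omega
  subst hj
  have h6 := LinearMap.congr_fun hax ⟨b, hb⟩
  rw [hΦ, hΦ] at h6
  rw [sub_mul, map_sub, h6, sub_self]

end Helpers

/-- if the orphan ideal is `(n+1)`-half-acyclic then the projection
`π : A → A/O` is a quasi-isomorphism (stated at the chain level: `H(π)` is
injective and surjective). -/
theorem projection_quasi_iso_of_half_acyclic {k A : Type} [Field k] [Ring A] [Algebra k A]
    (𝒜 : ℕ → Submodule k A) [GradedRing 𝒜]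
    (d : A →ₗ[k] A) (n : ℕ) (ε : A →ₗ[k] k)
    (hgc : GradedComm 𝒜) (hd : IsDifferential 𝒜 d)
    (hconn : ∀ a ∈ 𝒜 0, ∃ r : k, a = r • (1 : A))
    (hft : ∀ i : ℕ, FiniteDimensional k (𝒜 i))
    (hor : IsOrientation 𝒜 d n ε) (hpd : CohomologyPD 𝒜 d n ε)
    (hha : OrphansHalfAcyclic 𝒜 d n ε (n + 1)) :
    (∀ z : A, d z = 0 → (∃ o ∈ Orphans ε, z - o ∈ LinearMap.range d) →
      z ∈ LinearMap.range d) ∧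
    (∀ x : A, d x ∈ Orphans ε →
      ∃ z o b : A, d z = 0 ∧ o ∈ Orphans ε ∧ x = z + o + d b) := by
  constructor
  · rintro z hz ⟨o, ho, b, hb⟩
    have hdo : d o = 0 := by
      have h := hd.d_sq b
      rw [hb, map_sub, hz, zero_sub, neg_eq_zero] at h
      exact h
    have h := Submodule.add_mem _ (aux_exact hor hd hpd ho hdo) ⟨b, hb⟩
    rwa [add_sub_cancel] at h
  · intro x hx
    have h : x ∈ LinearMap.ker d ⊔ Orphans ε := by
      rw [← aux_sum (𝒜 := 𝒜) x]
      refine Submodule.sum_mem _ fun i _ => ?_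
      have hdx := aux_component hor hx (i + 1)
      rw [aux_decompose_d hd] at hdx
      generalize DirectSum.decompose 𝒜 x i = y at hdx
      obtain ⟨y, hy⟩ := y
      change d y ∈ Orphans ε at hdx
      change y ∈ _
      by_cases h1 : n < i
      · exact Submodule.mem_sup_right (aux_mem_orphans hor hy fun q hq => by omega)
      by_cases h2 : n ≤ 2 * i
      · obtain ⟨o, ho, -, hdo⟩ := hha (i + 1) (by omega) (by omega) (d y) hdx
          (hd.grade i y hy) (hd.d_sq _)
        refine Submodule.mem_sup.2 ⟨y - o, ?_, o, ho, by abel⟩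
        rw [LinearMap.mem_ker, map_sub, hdo, sub_self]
      · exact aux_low hgc hd hft hor hpd hha (j := n - i) (by omega) (by omega) hy hdx
    obtain ⟨z, hz, o, ho, hzo⟩ := Submodule.mem_sup.1 h
    exact ⟨z, o, 0, hz, ho, by simp [hzo]⟩

end PDCDGA
end

section
/- For an oriented differential Poincaré duality algebra (A,d,ε) of dimension n, the cohomology H^*(A,d) is a Poincaré duality algebra in dimension n: the induced forms H^i(A) ⊗ H^{n-i}(A) → k are non-degenerate. -/
namespace PDCDGA

variable {k : Type} [Field k]

/-- the cohomology of an oriented differential Poincaré duality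
algebra of dimension `n` is a Poincaré duality algebra in dimension `n`. -/
theorem cohomology_PD_of_differential_PD {k A : Type} [Field k] [Ring A] [Algebra k A]
    (𝒜 : ℕ → Submodule k A) [GradedRing 𝒜]
    (d : A →ₗ[k] A) (n : ℕ) (ε : A →ₗ[k] k)
    (hgc : GradedComm 𝒜) (hd : IsDifferential 𝒜 d)
    (hconn : ∀ a ∈ 𝒜 0, ∃ r : k, a = r • (1 : A))
    (hft : ∀ i : ℕ, FiniteDimensional k (𝒜 i))
    (hhom : ∀ i : ℕ, i ≠ n → ∀ a ∈ 𝒜 i, ε a = 0)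
    (hεd : ∀ a : A, ε (d a) = 0)
    (hndl : ∀ (i : ℕ) (a : A), a ∈ 𝒜 i → a ≠ 0 →
      ∃ (jd : ℕ) (b : A), i + jd = n ∧ b ∈ 𝒜 jd ∧ ε (a * b) ≠ 0)
    (hndr : ∀ (jd : ℕ) (b : A), b ∈ 𝒜 jd → b ≠ 0 →
      ∃ (i : ℕ) (a : A), i + jd = n ∧ a ∈ 𝒜 i ∧ ε (a * b) ≠ 0) :
    CohomologyPD 𝒜 d n ε := by
  intro i a ha hda hna
  by_contra hcon
  push Not at hcon
  apply hna
  by_cases ha0 : a = 0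
  · rw [ha0]; exact Submodule.zero_mem _
  obtain ⟨j, b₀, hij, hb₀, hab₀⟩ := hndl i a ha ha0
  have hz := fun b hb hdb => hcon j b hij hb hdb
  rcases i with _ | m
  · exfalso
    apply hab₀
    apply hz b₀ hb₀
    by_contra hne
    obtain ⟨l, c, hl, -⟩ := hndl (j + 1) (d b₀) (hd.grade j b₀ hb₀) hne
    omega
  have := hft m
  have := hft (j + 1)
  let B : 𝒜 m →ₗ[k] 𝒜 (j + 1) →ₗ[k] k :=
    ((LinearMap.mul k A).compr₂ ε).domRestrict₁₂ (𝒜 m) (𝒜 (j + 1))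
  have hB : ∀ c x, B c x = ε ((c : A) * (x : A)) := fun c x => rfl
  have hBl : Function.Injective B := by
    rw [injective_iff_map_eq_zero]
    intro c hc
    by_contra hne
    obtain ⟨l, x, hl, hx, hcx⟩ := hndl m c c.2 (by simpa using hne)
    obtain rfl : l = j + 1 := by omega
    exact hcx (by rw [← hB c ⟨x, hx⟩, hc]; rfl)
  have hBr : Function.Injective B.flip := by
    rw [injective_iff_map_eq_zero]
    intro x hx
    by_contra hne
    obtain ⟨l, c, hl, hc, hcx⟩ := hndr (j + 1) x x.2 (by simpa using hne)
    obtain rfl : l = m := by omega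
    exact hcx (by
      have := LinearMap.congr_fun hx ⟨c, hc⟩
      simpa [hB] using this)
  have hperf : B.IsPerfPair := LinearMap.IsPerfPair.of_injective hBl hBr
  let D : 𝒜 j →ₗ[k] 𝒜 (j + 1) := d.restrict (hd.grade j)
  let φ : Module.Dual k (𝒜 j) := (ε ∘ₗ LinearMap.mulLeft k a) ∘ₗ (𝒜 j).subtype
  have hφ : φ ∈ LinearMap.range D.dualMap := by
    rw [LinearMap.range_dualMap_eq_dualAnnihilator_ker, Submodule.mem_dualAnnihilator]
    intro b hb
    exact hz b b.2 (congrArg Subtype.val (LinearMap.mem_ker.1 hb))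
  obtain ⟨ψ, hψ⟩ := hφ
  obtain ⟨c, hc⟩ := hperf.bijective_left.2 ψ
  have key : ∀ b ∈ 𝒜 j, ε (a * b) = ε ((c : A) * d b) := by
    intro b hb
    have h1 := LinearMap.congr_fun hψ ⟨b, hb⟩
    rw [← hc] at h1
    exact h1.symm
  have key2 : ∀ b ∈ 𝒜 j, ε (d c * b) + (-1 : k) ^ m * ε ((c : A) * d b) = 0 := by
    intro b hb
    have := hεd ((c : A) * b)
    rwa [hd.leibniz m c b c.2, map_add, map_smul, smul_eq_mul] at this
  have hsq : (-1 : k) ^ m * (-1 : k) ^ m = 1 := by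
    rw [← mul_pow]; simp
  refine ⟨-((-1 : k) ^ m) • (c : A), ?_⟩
  by_contra hne
  have hmem : a - d (-((-1 : k) ^ m) • (c : A)) ∈ 𝒜 (m + 1) := by
    rw [map_smul]
    exact Submodule.sub_mem _ ha (Submodule.smul_mem _ _ (hd.grade m c c.2))
  obtain ⟨l, b, hl, hb, hab⟩ := hndl (m + 1) _ hmem (sub_ne_zero.2 (Ne.symm hne))
  obtain rfl : l = j := by omega
  apply hab
  rw [map_smul, sub_mul, smul_mul_assoc, map_sub, map_smul, smul_eq_mul, key b hb]
  linear_combination (-1 : k) ^ m * key2 b hb - hsq * ε ((c : A) * d b)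

end PDCDGA
end

section
/- Let Z be a linear complement of O ∩ d(A) in O, and Γ = ⟨γ_1,…,γ_l⟩. Then d(Z) = d(O), Z ∩ Γ = 0, and (Z ⊕ Γ) ∩ d(A) = 0. -/
namespace PDCDGA

variable {k : Type} [Field k]

/-- The differential commutes with the projections onto homogeneous components. -/
lemma decompose_d {A : Type} [Ring A] [Algebra k A] (𝒜 : ℕ → Submodule k A) [GradedRing 𝒜]
    (d : A →ₗ[k] A) (hd : IsDifferential 𝒜 d) (q : ℕ) (z : A) :
    ((DirectSum.decompose 𝒜 (d z) (q + 1) : 𝒜 (q + 1)) : A) =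
      d ((DirectSum.decompose 𝒜 z q : 𝒜 q) : A) := by
  induction z using DirectSum.Decomposition.inductionOn 𝒜 with
  | zero => simp
  | @homogeneous i m =>
    have h := hd.grade i m m.2
    by_cases hi : i = q
    · subst hi
      rw [DirectSum.decompose_of_mem_same 𝒜 h, DirectSum.decompose_of_mem_same 𝒜 m.2]
    · rw [DirectSum.decompose_of_mem_ne 𝒜 h (by omega),
        DirectSum.decompose_of_mem_ne 𝒜 m.2 hi, map_zero]
  | add a b ha hb =>
    simp only [map_add, DirectSum.decompose_add, DirectSum.add_apply, Submodule.coe_add, ha, hb]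

/-- for `Z` a complement of `O ∩ d(A)` in `O` and `Γ = ⟨γ₁,…,γ_l⟩`
one has `d(Z) = d(O)`, `Z ∩ Γ = 0` and `(Z ⊕ Γ) ∩ d(A) = 0`.
(Here `γ_i ∈ A^{kk}` and `α_i ∈ A^{kk+1}`, i.e. `kk` is the paper's `k−1`.) -/
theorem Z_Gamma_complement {k A : Type} [Field k] [Ring A] [Algebra k A]
    (𝒜 : ℕ → Submodule k A) [GradedRing 𝒜]
    (d : A →ₗ[k] A) (n : ℕ) (ε : A →ₗ[k] k)
    (hgc : GradedComm 𝒜) (hd : IsDifferential 𝒜 d)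
    (hconn : ∀ a ∈ 𝒜 0, ∃ r : k, a = r • (1 : A))
    (hft : ∀ i : ℕ, FiniteDimensional k (𝒜 i))
    (hor : IsOrientation 𝒜 d n ε) (hpd : CohomologyPD 𝒜 d n ε)
    (l kk : ℕ) (α γ : Fin l → A)
    (hαm : ∀ i, α i ∈ 𝒜 (kk + 1)) (hαz : ∀ i, d (α i) = 0)
    (hαo : ∀ i, α i ∈ Orphans ε)
    (hspan : ∀ a : A, a ∈ Orphans ε → a ∈ 𝒜 (kk + 1) → d a = 0 →
      ∃ (b : A) (cf : Fin l → k), b ∈ Orphans ε ∧ b ∈ 𝒜 kk ∧ a = d b + ∑ i, cf i • α i)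
    (hind : ∀ (cf : Fin l → k) (b : A), b ∈ Orphans ε → b ∈ 𝒜 kk →
      (∑ i, cf i • α i) = d b → ∀ i, cf i = 0)
    (hγm : ∀ i, γ i ∈ 𝒜 kk) (hγd : ∀ i, d (γ i) = α i)
    (hγperp : ∀ (i : Fin l) (z : A), d z = 0 → ε (γ i * z) = 0)
    (Z : Submodule k A) (hZo : Z ≤ Orphans ε)
    (hZdisj : Z ⊓ (Orphans ε ⊓ LinearMap.range d) = ⊥)
    (hZsup : Z ⊔ (Orphans ε ⊓ LinearMap.range d) = Orphans ε)
    (hZgr : ∀ z ∈ Z, ∀ i : ℕ, ((DirectSum.decompose 𝒜 z i : 𝒜 i) : A) ∈ Z) :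
    Submodule.map d Z = Submodule.map d (Orphans ε) ∧
    Z ⊓ Submodule.span k (Set.range γ) = ⊥ ∧
    (Z ⊔ Submodule.span k (Set.range γ)) ⊓ LinearMap.range d = ⊥ := by
  have key : ∀ z ∈ Z, ∀ cf : Fin l → k, d (z + ∑ i, cf i • γ i) = 0 →
      ∑ i, cf i • γ i = 0 := by
    intro z hz cf h
    have hdz : d (-z) = ∑ i, cf i • α i := by
      simp only [map_add, map_sum, map_smul, hγd] at h
      rw [map_neg]
      exact (eq_neg_of_add_eq_zero_right h).symm
    have hm : ∑ i, cf i • α i ∈ 𝒜 (kk + 1) :=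
      Submodule.sum_mem _ fun i _ => Submodule.smul_mem _ _ (hαm i)
    have h1 := decompose_d 𝒜 d hd kk (-z)
    rw [hdz, DirectSum.decompose_of_mem_same 𝒜 hm] at h1
    have h2 := hind cf _ (hZo (hZgr (-z) (Z.neg_mem hz) kk)) (SetLike.coe_mem _) h1
    simp [h2]
  refine ⟨?_, ?_, ?_⟩
  · conv_rhs => rw [← hZsup]
    rw [Submodule.map_sup]
    refine (sup_eq_left.mpr ?_).symm
    rintro _ ⟨x, ⟨_, ⟨w, rfl⟩⟩, rfl⟩
    rw [hd.d_sq]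
    exact Submodule.zero_mem _
  · rw [eq_bot_iff]
    rintro x ⟨hxZ, hxG⟩
    obtain ⟨cf, rfl⟩ := (Submodule.mem_span_range_iff_exists_fun k).mp hxG
    exact key _ (Z.neg_mem hxZ) cf (by simp)
  · rw [eq_bot_iff]
    rintro x ⟨hx, hxd⟩
    obtain ⟨z, hz, g, hg, rfl⟩ := Submodule.mem_sup.mp hx
    obtain ⟨cf, rfl⟩ := (Submodule.mem_span_range_iff_exists_fun k).mp hg
    have h0 := key z hz cf (by
      obtain ⟨w, hw⟩ := hxd
      rw [← hw, hd.d_sq])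
    rw [h0, add_zero] at hxd ⊢
    rw [← hZdisj]
    exact ⟨hz, hZo hz, hxd⟩

end PDCDGA
end

section
/- If i > n − k + 2, then O^i ⊆ Ô^i, i.e. every degree-i orphan of A remains an orphan in Â. -/
namespace PDCDGA

variable {k : Type} [Field k]

/-- if `i > n − k + 2` (with `k = q+2`), then `Oⁱ ⊆ Ôⁱ`:
every degree-`i` orphan of `A` remains an orphan in `Â`. -/
theorem orphans_persist_above {k A B : Type} [Field k] [Ring A] [Algebra k A] [Ring B] [Algebra k B]
    (𝒜 : ℕ → Submodule k A) [GradedRing 𝒜] (ℬ : ℕ → Submodule k B) [GradedRing ℬ]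
    (d : A →ₗ[k] A) (D : B →ₗ[k] B) (n q l : ℕ)
    (ε : A →ₗ[k] k) (E : B →ₗ[k] k)
    (hgcA : GradedComm 𝒜) (hdA : IsDifferential 𝒜 d)
    (hgcB : GradedComm ℬ) (hdB : IsDifferential ℬ D)
    (hft : ∀ i : ℕ, FiniteDimensional k (𝒜 i))
    (hconn : ∀ a ∈ 𝒜 0, ∃ r : k, a = r • (1 : A))
    (h1 : 𝒜 1 = ⊥) (h2 : ∀ a ∈ 𝒜 2, d a = 0)
    (hn : 7 ≤ n) (hk : n + 2 ≤ 2 * (q + 2))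
    (hor : IsOrientation 𝒜 d n ε) (hpd : CohomologyPD 𝒜 d n ε)
    (α γ : Fin l → A)
    (hαm : ∀ i, α i ∈ 𝒜 (q + 2)) (hαz : ∀ i, d (α i) = 0) (hαo : ∀ i, α i ∈ Orphans ε)
    (hspan : ∀ a : A, a ∈ Orphans ε → a ∈ 𝒜 (q + 2) → d a = 0 →
      ∃ (b : A) (cf : Fin l → k), b ∈ Orphans ε ∧ b ∈ 𝒜 (q + 1) ∧ a = d b + ∑ i, cf i • α i)
    (hind : ∀ (cf : Fin l → k) (b : A), b ∈ Orphans ε → b ∈ 𝒜 (q + 1) →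
      (∑ i, cf i • α i) = d b → ∀ i, cf i = 0)
    (hγm : ∀ i, γ i ∈ 𝒜 (q + 1)) (hγd : ∀ i, d (γ i) = α i)
    (hγperp : ∀ (i : Fin l) (z : A), d z = 0 → ε (γ i * z) = 0)
    (T Z : Submodule k A)
    (hT : IsCompl T (LinearMap.range d)) (hγT : ∀ i, γ i ∈ T)
    (hZo : Z ≤ Orphans ε)
    (hZdisj : Z ⊓ (Orphans ε ⊓ LinearMap.range d) = ⊥)
    (hZsup : Z ⊔ (Orphans ε ⊓ LinearMap.range d) = Orphans ε)
    (hZT : Z ≤ T)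
    (hZgr : ∀ z ∈ Z, ∀ i : ℕ, ((DirectSum.decompose 𝒜 z i : 𝒜 i) : A) ∈ Z)
    (j : A →ₐ[k] B) (hjgr : ∀ i : ℕ, ∀ a ∈ 𝒜 i, j a ∈ ℬ i)
    (hjch : ∀ a : A, D (j a) = j (d a))
    (c w : Fin l → B) (hcm : ∀ i, c i ∈ ℬ (q + 1)) (hwm : ∀ i, w i ∈ ℬ q)
    (hDc : ∀ i, D (c i) = j (α i)) (hDw : ∀ i, D (w i) = c i - j (γ i))
    (hcase : CharZero k ∨ Odd (q + 2))
    (hfree : ∀ x : B, ∃! f : MonIdx q l →₀ A,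
      (f.sum fun μ a => j a * monomial c w μ.1) = x)
    (hEj : ∀ a : A, E (j a) = ε a)
    (hEwd : ∀ (i : Fin l) (ξ : A), E (w i * j (d ξ)) = ((-1 : k) ^ (q + 2)) * ε (γ i * ξ))
    (hEcc : ∀ i i' : Fin l, E (c i * c i') = - ε (γ i * γ i'))
    (hEw : ∀ i : Fin l, E (w i) = 0)
    (hEwT : ∀ (i : Fin l) (t : A), t ∈ T → E (w i * j t) = 0)
    (hEc : ∀ i : Fin l, E (c i) = 0)
    (hEcj : ∀ (i : Fin l) (ξ : A), E (c i * j ξ) = 0)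
    (hEccj : ∀ (i i' : Fin l) (ξ : A), E (c i * c i' * j ξ) = 0)
    (hEcw : ∀ i i' : Fin l, E (c i * w i') = 0)
    (hEcwj : ∀ (i i' : Fin l) (ξ : A), E (c i * w i' * j ξ) = 0)
    (hEww : ∀ i i' : Fin l, E (w i * w i') = 0)
    (hEwwj : ∀ (i i' : Fin l) (ξ : A), E (w i * w i' * j ξ) = 0)
    (hEhom : ∀ m : ℕ, m ≠ n → ∀ x ∈ ℬ m, E x = 0) :
    ∀ i : ℕ, n + 2 < i + (q + 2) → ∀ a : A, a ∈ Orphans ε → a ∈ 𝒜 i →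
      j a ∈ Orphans E := by
  intro i hi a ha hai
  rw [mem_orphans] at ha ⊢
  have key : ∀ (μ : (Fin l → ℕ) × (Fin l → ℕ)) (b : A),
      E (j a * (j b * monomial c w μ)) = 0 := by
    intro μ b
    by_cases h0 : (∀ t, μ.1 t = 0) ∧ (∀ t, μ.2 t = 0)
    · have hm : monomial c w μ = 1 := by
        simp [monomial, h0.1, h0.2]
      rw [hm, mul_one, ← map_mul, hEj, ha]
    · have hc1 : (((List.finRange l).map fun t => c t ^ μ.1 t).prod) ∈
          ℬ (((List.finRange l).map fun t => μ.1 t • (q + 1)).sum) :=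
        SetLike.list_prod_map_mem_graded _ _ _
          (fun t _ => SetLike.pow_mem_graded (μ.1 t) (hcm t))
      have hw1 : (((List.finRange l).map fun t => w t ^ μ.2 t).prod) ∈
          ℬ (((List.finRange l).map fun t => μ.2 t • q).sum) :=
        SetLike.list_prod_map_mem_graded _ _ _
          (fun t _ => SetLike.pow_mem_graded (μ.2 t) (hwm t))
      have hm := SetLike.mul_mem_graded hc1 hw1
      have hdeg : q ≤ ((List.finRange l).map fun t => μ.1 t • (q + 1)).sum +
          ((List.finRange l).map fun t => μ.2 t • q).sum := by
        rw [not_and_or] at h0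
        rcases h0 with h0 | h0
        · obtain ⟨t, ht⟩ := not_forall.mp h0
          have h3 : μ.1 t • (q + 1) ≤ ((List.finRange l).map fun t => μ.1 t • (q + 1)).sum :=
            List.single_le_sum (fun _ _ => Nat.zero_le _) _
              (List.mem_map.mpr ⟨t, List.mem_finRange t, rfl⟩)
          have h4 : q + 1 ≤ μ.1 t • (q + 1) :=
            Nat.le_mul_of_pos_left _ (Nat.pos_of_ne_zero ht)
          omega
        · obtain ⟨t, ht⟩ := not_forall.mp h0
          have h3 : μ.2 t • q ≤ ((List.finRange l).map fun t => μ.2 t • q).sum :=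
            List.single_le_sum (fun _ _ => Nat.zero_le _) _
              (List.mem_map.mpr ⟨t, List.mem_finRange t, rfl⟩)
          have h4 : q ≤ μ.2 t • q :=
            Nat.le_mul_of_pos_left _ (Nat.pos_of_ne_zero ht)
          omega
      induction b using DirectSum.Decomposition.inductionOn 𝒜 with
      | zero => simp
      | @homogeneous m b =>
        refine hEhom _ ?_ _ (SetLike.mul_mem_graded (hjgr _ _ hai)
          (SetLike.mul_mem_graded (hjgr _ _ b.2) hm))
        omega
      | add b b' hb hb' => rw [map_add, add_mul, mul_add, map_add, hb, hb', add_zero]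
  intro x
  obtain ⟨f, hf, -⟩ := hfree x
  rw [← hf]
  simp only [Finsupp.sum, Finset.mul_sum, map_sum]
  exact Finset.sum_eq_zero fun μ _ => key μ.1 (f μ)

end PDCDGA
end

section
/- For i ∈ {k−2, k−1, k}, Ô^i ∩ ker d̂ ⊆ O^i ∩ ker d: every cocycle orphan of Â in these degrees lies in A and is an orphan cocycle of A. -/
namespace PDCDGA

variable {k : Type} [Field k]

lemma aux_prod_list {B : Type} [Monoid B] {l : ℕ} (c : Fin l → B) (t : Fin l) (L : List (Fin l))
    (hL : L.Nodup) :
    (L.map fun i => c i ^ (Pi.single t 1 : Fin l → ℕ) i).prod = if t ∈ L then c t else 1 := by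
  induction L with
  | nil => simp
  | cons x L ih =>
    rw [List.nodup_cons] at hL
    rw [List.map_cons, List.prod_cons, ih hL.2]
    by_cases hx : x = t
    · subst hx
      simp [hL.1]
    · have hx' : ¬ t = x := fun h => hx h.symm
      simp [Pi.single_apply, hx, hx']

/-- Index of the basic monomials `1`, `c t`, `w t`. -/
def smallIdx (l : ℕ) : Option (Fin l ⊕ Fin l) → (Fin l → ℕ) × (Fin l → ℕ)
  | none => (0, 0)
  | some (Sum.inl t) => (Pi.single t 1, 0)
  | some (Sum.inr t) => (0, Pi.single t 1)

lemma aux_single_le {l : ℕ} (t i : Fin l) : (Pi.single t 1 : Fin l → ℕ) i ≤ 1 := by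
  rw [Pi.single_apply]; split_ifs <;> simp

lemma aux_single_ne {l : ℕ} (t : Fin l) : (Pi.single t 1 : Fin l → ℕ) ≠ 0 := by
  simp

def smallMon (q l : ℕ) (o : Option (Fin l ⊕ Fin l)) : MonIdx q l :=
  ⟨smallIdx l o, by
    rcases o with _ | t | t <;>
      simp [smallIdx, aux_single_le]⟩

lemma smallMon_inj (q l : ℕ) : Function.Injective (smallMon q l) := by
  intro a b h
  have h' : smallIdx l a = smallIdx l b := congrArg Subtype.val h
  have hs : Function.Injective (fun t : Fin l => (Pi.single t 1 : Fin l → ℕ)) := by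
    intro t t' htt
    by_contra hne
    have := congrFun htt t
    simp [Pi.single_apply, hne] at this
  rcases a with _ | t | t <;> rcases b with _ | t' | t' <;>
    simp only [smallIdx, Prod.mk.injEq] at h'
  · rfl
  · exact absurd h'.1.symm (aux_single_ne t')
  · exact absurd h'.2.symm (aux_single_ne t')
  · exact absurd h'.1 (aux_single_ne t)
  · rw [hs h'.1]
  · exact absurd h'.1 (aux_single_ne t)
  · exact absurd h'.2 (aux_single_ne t)
  · exact absurd h'.2 (aux_single_ne t)
  · rw [hs h'.2]

lemma monomial_zero {B : Type} [Monoid B] {l : ℕ} (c w : Fin l → B) :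
    monomial c w (0, 0) = 1 := by
  simp [monomial]

lemma monomial_c {B : Type} [Monoid B] {l : ℕ} (c w : Fin l → B) (t : Fin l) :
    monomial c w (Pi.single t 1, 0) = c t := by
  unfold monomial
  rw [aux_prod_list c t _ (List.nodup_finRange l)]
  simp

lemma monomial_w {B : Type} [Monoid B] {l : ℕ} (c w : Fin l → B) (t : Fin l) :
    monomial c w (0, Pi.single t 1) = w t := by
  unfold monomial
  dsimp only
  rw [aux_prod_list w t _ (List.nodup_finRange l)]
  simp

lemma free_zero {k A B : Type} [Field k] [Ring A] [Algebra k A] [Ring B] [Algebra k B]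
    {q l : ℕ} (j : A →ₐ[k] B) (c w : Fin l → B)
    (hfree : ∀ x : B, ∃! f : MonIdx q l →₀ A,
      (f.sum fun μ a => j a * monomial c w μ.1) = x)
    (a : A) (b e : Fin l → A)
    (h : j a + (∑ t, j (b t) * c t + ∑ t, j (e t) * w t) = 0) :
    a = 0 ∧ (∀ t, b t = 0) ∧ (∀ t, e t = 0) := by
  let g : Option (Fin l ⊕ Fin l) → A := fun o => Option.elim o a (Sum.elim b e)
  let f : MonIdx q l →₀ A :=
    Finsupp.embDomain ⟨smallMon q l, smallMon_inj q l⟩ (Finsupp.equivFunOnFinite.symm g)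
  have hf : (f.sum fun μ a => j a * monomial c w μ.1) = 0 := by
    rw [Finsupp.sum_embDomain, Finsupp.sum_fintype _ _ (by simp)]
    simpa [g, smallMon, smallIdx, monomial_zero, monomial_c, monomial_w] using h
  have h0 : f = 0 := (hfree 0).unique hf (by simp)
  have hg : ∀ o, g o = 0 := by
    intro o
    have h1 : f (smallMon q l o) = g o :=
      Finsupp.embDomain_apply_self ⟨smallMon q l, smallMon_inj q l⟩
        (Finsupp.equivFunOnFinite.symm g) o
    rw [← h1, h0]; rfl
  exact ⟨hg none, fun t => hg (some (Sum.inl t)), fun t => hg (some (Sum.inr t))⟩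

lemma aux_list_deg {k B : Type} [Field k] [Ring B] [Algebra k B]
    (ℬ : ℕ → Submodule k B) [GradedRing ℬ] {l : ℕ} (c : Fin l → B) (p : ℕ)
    (hc : ∀ t, c t ∈ ℬ p) (s : Fin l → ℕ) :
    (((List.finRange l).map fun i => c i ^ s i).prod) ∈ ℬ ((∑ i, s i) * p) := by
  have h := SetLike.list_prod_map_mem_graded (A := ℬ) (List.finRange l) (fun i => s i * p)
    (fun i => c i ^ s i) (fun i _ => by
      simpa using SetLike.pow_mem_graded (A := ℬ) (s i) (hc i))
  have e : ((List.finRange l).map fun i => s i * p).sum = (∑ i, s i) * p := by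
    rw [Finset.sum_mul, ← List.ofFn_eq_map, List.sum_ofFn]
  rwa [e] at h

lemma aux_sum_one {l : ℕ} (s : Fin l → ℕ) (h : ∑ i, s i = 1) : ∃ t, s = Pi.single t 1 := by
  have hne : ∃ t, s t ≠ 0 := by
    by_contra hcon
    push Not at hcon
    simp [hcon] at h
  obtain ⟨t, ht⟩ := hne
  refine ⟨t, ?_⟩
  have h2 := Finset.add_sum_erase Finset.univ s (Finset.mem_univ t)
  have h3 : ∑ x ∈ Finset.univ.erase t, s x = 0 := by omega
  rw [Finset.sum_eq_zero_iff] at h3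
  funext i
  by_cases hi : i = t
  · subst hi; simp; omega
  · rw [Pi.single_eq_of_ne hi]
    exact h3 i (by simp [hi])

/-- Elements of the form `j a + ∑ j b c + ∑ j e w`. -/
def IsSmall {k A B : Type} [Field k] [Ring A] [Algebra k A] [Ring B] [Algebra k B]
    {l : ℕ} (j : A →ₐ[k] B) (c w : Fin l → B) (A0 A1 A2 : Submodule k A) (x : B) : Prop :=
  ∃ (a : A) (b e : Fin l → A), a ∈ A0 ∧ (∀ t, b t ∈ A1) ∧ (∀ t, e t ∈ A2) ∧
    x = j a + (∑ t, j (b t) * c t + ∑ t, j (e t) * w t)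

lemma IsSmall.zero {k A B : Type} [Field k] [Ring A] [Algebra k A] [Ring B] [Algebra k B]
    {l : ℕ} (j : A →ₐ[k] B) (c w : Fin l → B) (A0 A1 A2 : Submodule k A) :
    IsSmall j c w A0 A1 A2 0 :=
  ⟨0, 0, 0, by simp, by simp, by simp, by simp⟩

lemma IsSmall.add {k A B : Type} [Field k] [Ring A] [Algebra k A] [Ring B] [Algebra k B]
    {l : ℕ} {j : A →ₐ[k] B} {c w : Fin l → B} {A0 A1 A2 : Submodule k A} {x y : B}
    (hx : IsSmall j c w A0 A1 A2 x) (hy : IsSmall j c w A0 A1 A2 y) :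
    IsSmall j c w A0 A1 A2 (x + y) := by
  obtain ⟨a, b, e, ha, hb, he, rfl⟩ := hx
  obtain ⟨a', b', e', ha', hb', he', rfl⟩ := hy
  refine ⟨a + a', b + b', e + e', add_mem ha ha', fun t => add_mem (hb t) (hb' t),
    fun t => add_mem (he t) (he' t), ?_⟩
  simp only [map_add, Pi.add_apply, add_mul, Finset.sum_add_distrib]
  abel

lemma small_of_mem {k A B : Type} [Field k] [Ring A] [Algebra k A] [Ring B] [Algebra k B]
    (𝒜 : ℕ → Submodule k A) [GradedRing 𝒜] (ℬ : ℕ → Submodule k B) [GradedRing ℬ]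
    {q l : ℕ} (hq : 3 ≤ q) (j : A →ₐ[k] B) (hjgr : ∀ i : ℕ, ∀ a ∈ 𝒜 i, j a ∈ ℬ i)
    (c w : Fin l → B) (hcm : ∀ i, c i ∈ ℬ (q + 1)) (hwm : ∀ i, w i ∈ ℬ q)
    (hfree : ∀ x : B, ∃! f : MonIdx q l →₀ A,
      (f.sum fun μ a => j a * monomial c w μ.1) = x)
    (i : ℕ) (hi : i ≤ q + 2) (A1 A2 : Submodule k A)
    (hA1 : ∀ m, m + (q + 1) = i → 𝒜 m ≤ A1) (hA2 : ∀ m, m + q = i → 𝒜 m ≤ A2)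
    (x : B) (hx : x ∈ ℬ i) : IsSmall j c w (𝒜 i) A1 A2 x := by
  classical
  have key : ∀ (μ : (Fin l → ℕ) × (Fin l → ℕ)) (a : A),
      IsSmall j c w (𝒜 i) A1 A2 (GradedRing.proj ℬ i (j a * monomial c w μ)) := by
    intro μ a
    induction a using DirectSum.Decomposition.inductionOn 𝒜 with
    | zero => simpa using IsSmall.zero j c w (𝒜 i) A1 A2
    | add a a' h h' =>
      rw [map_add, add_mul, map_add]
      exact h.add h'
    | @homogeneous m a =>
      obtain ⟨s, e⟩ := μ
      have hm : j (a : A) * monomial c w (s, e) ∈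
          ℬ (m + ((∑ i, s i) * (q + 1) + (∑ i, e i) * q)) :=
        SetLike.mul_mem_graded (hjgr m a a.2)
          (SetLike.mul_mem_graded (aux_list_deg ℬ c _ hcm s) (aux_list_deg ℬ w _ hwm e))
      rw [GradedRing.proj_apply]
      by_cases hd : m + ((∑ i, s i) * (q + 1) + (∑ i, e i) * q) = i
      · rw [hd] at hm
        rw [DirectSum.decompose_of_mem_same ℬ hm]
        have hle : (∑ i, s i) + (∑ i, e i) < 2 := by
          by_contra hcon
          push Not at hcon
          have h5 := Nat.mul_le_mul_right q hcon
          clear hm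
          generalize (∑ i, s i) = S at *
          generalize (∑ i, e i) = F at *
          rw [add_mul] at h5
          rw [mul_add] at hd
          omega
        have hcases : ((∑ i, s i) = 0 ∧ (∑ i, e i) = 0) ∨ ((∑ i, s i) = 1 ∧ (∑ i, e i) = 0) ∨
          ((∑ i, s i) = 0 ∧ (∑ i, e i) = 1) := by omega
        have hz : ∀ s : Fin l → ℕ, ∑ i, s i = 0 → s = 0 := by
          intro s hs
          funext t
          exact (Finset.sum_eq_zero_iff.1 hs) t (Finset.mem_univ t)
        rcases hcases with ⟨h1, h2⟩ | ⟨h1, h2⟩ | ⟨h1, h2⟩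
        · rw [h1, h2] at hd
          have hmi : m = i := by omega
          rw [hz s h1, hz e h2, monomial_zero]
          exact ⟨a, 0, 0, by rw [← hmi]; exact a.2, by simp, by simp, by simp⟩
        · rw [h1, h2] at hd
          have hmi : m + (q + 1) = i := by omega
          obtain ⟨t, rfl⟩ := aux_sum_one s h1
          rw [hz e h2, monomial_c]
          refine ⟨0, Pi.single t a, 0, by simp, fun t' => ?_, by simp, ?_⟩
          · rw [Pi.single_apply]
            split_ifs
            · exact hA1 m hmi a.2
            · exact zero_mem _
          · simp [Pi.single_apply, apply_ite j, ite_mul]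
        · rw [h1, h2] at hd
          have hmi : m + q = i := by omega
          obtain ⟨t, rfl⟩ := aux_sum_one e h2
          rw [hz s h1, monomial_w]
          refine ⟨0, 0, Pi.single t a, by simp, by simp, fun t' => ?_, ?_⟩
          · rw [Pi.single_apply]
            split_ifs
            · exact hA2 m hmi a.2
            · exact zero_mem _
          · simp [Pi.single_apply, apply_ite j, ite_mul]
      · rw [DirectSum.decompose_of_mem_ne ℬ hm hd]
        exact IsSmall.zero j c w (𝒜 i) A1 A2
  obtain ⟨f, hf, -⟩ := hfree x
  have hpx : GradedRing.proj ℬ i x = x := by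
    rw [GradedRing.proj_apply]
    exact DirectSum.decompose_of_mem_same ℬ hx
  rw [← hpx, ← hf, Finsupp.sum, map_sum]
  exact Finset.sum_induction _ (IsSmall j c w (𝒜 i) A1 A2) (fun _ _ h h' => h.add h')
    (IsSmall.zero j c w (𝒜 i) A1 A2) (fun μ _ => key μ.1 (f μ))

theorem hat_orphan_cocycles_come_from_A {k A B : Type} [Field k] [Ring A] [Algebra k A] [Ring B] [Algebra k B]
    (𝒜 : ℕ → Submodule k A) [GradedRing 𝒜] (ℬ : ℕ → Submodule k B) [GradedRing ℬ]
    (d : A →ₗ[k] A) (D : B →ₗ[k] B) (n q l : ℕ)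
    (ε : A →ₗ[k] k) (E : B →ₗ[k] k)
    (hgcA : GradedComm 𝒜) (hdA : IsDifferential 𝒜 d)
    (hgcB : GradedComm ℬ) (hdB : IsDifferential ℬ D)
    (hft : ∀ i : ℕ, FiniteDimensional k (𝒜 i))
    (hconn : ∀ a ∈ 𝒜 0, ∃ r : k, a = r • (1 : A))
    (h1 : 𝒜 1 = ⊥) (h2 : ∀ a ∈ 𝒜 2, d a = 0)
    (hn : 7 ≤ n) (hk : n + 2 ≤ 2 * (q + 2))
    (hor : IsOrientation 𝒜 d n ε) (hpd : CohomologyPD 𝒜 d n ε)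
    (α γ : Fin l → A)
    (hαm : ∀ i, α i ∈ 𝒜 (q + 2)) (hαz : ∀ i, d (α i) = 0) (hαo : ∀ i, α i ∈ Orphans ε)
    (hspan : ∀ a : A, a ∈ Orphans ε → a ∈ 𝒜 (q + 2) → d a = 0 →
      ∃ (b : A) (cf : Fin l → k), b ∈ Orphans ε ∧ b ∈ 𝒜 (q + 1) ∧ a = d b + ∑ i, cf i • α i)
    (hind : ∀ (cf : Fin l → k) (b : A), b ∈ Orphans ε → b ∈ 𝒜 (q + 1) →
      (∑ i, cf i • α i) = d b → ∀ i, cf i = 0)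
    (hγm : ∀ i, γ i ∈ 𝒜 (q + 1)) (hγd : ∀ i, d (γ i) = α i)
    (hγperp : ∀ (i : Fin l) (z : A), d z = 0 → ε (γ i * z) = 0)
    (T Z : Submodule k A)
    (hT : IsCompl T (LinearMap.range d)) (hγT : ∀ i, γ i ∈ T)
    (hZo : Z ≤ Orphans ε)
    (hZdisj : Z ⊓ (Orphans ε ⊓ LinearMap.range d) = ⊥)
    (hZsup : Z ⊔ (Orphans ε ⊓ LinearMap.range d) = Orphans ε)
    (hZT : Z ≤ T)
    (hZgr : ∀ z ∈ Z, ∀ i : ℕ, ((DirectSum.decompose 𝒜 z i : 𝒜 i) : A) ∈ Z)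
    (j : A →ₐ[k] B) (hjgr : ∀ i : ℕ, ∀ a ∈ 𝒜 i, j a ∈ ℬ i)
    (hjch : ∀ a : A, D (j a) = j (d a))
    (c w : Fin l → B) (hcm : ∀ i, c i ∈ ℬ (q + 1)) (hwm : ∀ i, w i ∈ ℬ q)
    (hDc : ∀ i, D (c i) = j (α i)) (hDw : ∀ i, D (w i) = c i - j (γ i))
    (hcase : CharZero k ∨ Odd (q + 2))
    (hfree : ∀ x : B, ∃! f : MonIdx q l →₀ A,
      (f.sum fun μ a => j a * monomial c w μ.1) = x)
    (hEj : ∀ a : A, E (j a) = ε a)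
    (hEwd : ∀ (i : Fin l) (ξ : A), E (w i * j (d ξ)) = ((-1 : k) ^ (q + 2)) * ε (γ i * ξ))
    (hEcc : ∀ i i' : Fin l, E (c i * c i') = - ε (γ i * γ i'))
    (hEw : ∀ i : Fin l, E (w i) = 0)
    (hEwT : ∀ (i : Fin l) (t : A), t ∈ T → E (w i * j t) = 0)
    (hEc : ∀ i : Fin l, E (c i) = 0)
    (hEcj : ∀ (i : Fin l) (ξ : A), E (c i * j ξ) = 0)
    (hEccj : ∀ (i i' : Fin l) (ξ : A), E (c i * c i' * j ξ) = 0)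
    (hEcw : ∀ i i' : Fin l, E (c i * w i') = 0)
    (hEcwj : ∀ (i i' : Fin l) (ξ : A), E (c i * w i' * j ξ) = 0)
    (hEww : ∀ i i' : Fin l, E (w i * w i') = 0)
    (hEwwj : ∀ (i i' : Fin l) (ξ : A), E (w i * w i' * j ξ) = 0)
    (hEhom : ∀ m : ℕ, m ≠ n → ∀ x ∈ ℬ m, E x = 0) :
    ∀ i : ℕ, (i = q ∨ i = q + 1 ∨ i = q + 2) →
      ∀ x : B, x ∈ Orphans E → x ∈ ℬ i → D x = 0 →
        ∃ a : A, a ∈ Orphans ε ∧ a ∈ 𝒜 i ∧ d a = 0 ∧ x = j a := by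
  have hq : 3 ≤ q := by omega
  have horph : ∀ a : A, j a ∈ Orphans E → a ∈ Orphans ε := by
    intro a ha
    rw [mem_orphans] at ha ⊢
    intro b
    rw [← hEj, map_mul]
    exact ha (j b)
  have hd1 : d 1 = 0 := by
    have h := hdA.leibniz 0 1 1 SetLike.GradedOne.one_mem
    simpa using h
  -- the cases `q` and `q + 2`
  have hw : ∀ (i m : ℕ), m + q = i → i ≤ q + 2 → (∀ e ∈ 𝒜 m, d e = 0) →
      (∀ m', m' + (q + 1) = i → 𝒜 m' ≤ ⊥) → ∀ x : B, x ∈ Orphans E → x ∈ ℬ i → D x = 0 →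
        ∃ a : A, a ∈ Orphans ε ∧ a ∈ 𝒜 i ∧ d a = 0 ∧ x = j a := by
    intro i m hmi hi hde hbot x hxo hx hDx
    obtain ⟨a, b, e, ha, hb, he, rfl⟩ := small_of_mem 𝒜 ℬ hq j hjgr c w hcm hwm hfree i hi ⊥ (𝒜 m)
      hbot (fun m' hm' => by rw [show m' = m by omega]) x hx
    have hb0 : ∀ t, b t = 0 := fun t => by simpa using hb t
    have hDe : ∀ t, D (j (e t) * w t) =
        j (((-1 : k) ^ m) • e t) * c t - j (((-1 : k) ^ m) • (e t * γ t)) := by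
      intro t
      rw [hdB.leibniz m _ _ (hjgr m _ (he t)), hjch, hde _ (he t), hDw]
      simp only [map_zero, zero_mul, zero_add, map_smul, map_mul, mul_sub, smul_sub,
        smul_mul_assoc]
    have h0 : j (d a - ∑ t, ((-1 : k) ^ m) • (e t * γ t)) +
        (∑ t, j (((-1 : k) ^ m) • e t) * c t + ∑ t, j ((0 : Fin l → A) t) * w t) = 0 := by
      rw [← hDx]
      simp only [hb0, map_add, map_sum, hDe, hjch, Finset.sum_sub_distrib, map_sub, map_zero,
        zero_mul, Finset.sum_const_zero, Pi.zero_apply]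
      abel
    obtain ⟨h1', h2', -⟩ := free_zero j c w hfree _ _ _ h0
    have he0 : ∀ t, e t = 0 := fun t =>
      (smul_eq_zero.1 (h2' t)).resolve_left (pow_ne_zero _ (by simp))
    have hxa : j a + (∑ t, j (b t) * c t + ∑ t, j (e t) * w t) = j a := by
      simp [hb0, he0]
    rw [hxa] at hxo ⊢
    refine ⟨a, horph a hxo, ha, ?_, rfl⟩
    simpa [he0] using h1'
  rintro i (rfl | rfl | rfl) x hxo hx hDx
  · refine hw i 0 (by omega) (by omega) ?_ (fun m' hm' => by omega) x hxo hx hDx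
    intro e he
    obtain ⟨r, rfl⟩ := hconn e he
    rw [map_smul, hd1, smul_zero]
  · obtain ⟨a, b, e, ha, hb, he, rfl⟩ := small_of_mem 𝒜 ℬ hq j hjgr c w hcm hwm hfree (q + 1)
      (by omega) (𝒜 0) ⊥ (fun m' hm' => by rw [show m' = 0 by omega])
      (fun m' hm' => by rw [show m' = 1 by omega, h1]) x hx
    have he0 : ∀ t, e t = 0 := fun t => by simpa using he t
    choose r hr using fun t => hconn (b t) (hb t)
    have hxa : j a + (∑ t, j (b t) * c t + ∑ t, j (e t) * w t) = j a + ∑ t, r t • c t := by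
      simp [he0, hr]
    rw [hxa] at hxo hDx ⊢
    have hao : a ∈ Orphans ε := by
      rw [mem_orphans] at hxo ⊢
      intro y
      have h := hxo (j y)
      rw [add_mul, map_add, ← map_mul, hEj, Finset.sum_mul, map_sum] at h
      simpa [hEcj] using h
    have h0 : j (d a + ∑ t, r t • α t) +
        (∑ t, j ((0 : Fin l → A) t) * c t + ∑ t, j ((0 : Fin l → A) t) * w t) = 0 := by
      rw [← hDx]
      simp [hjch, hDc]
    have h1' := (free_zero j c w hfree _ _ _ h0).1
    have hr0 := hind r (-a) (neg_mem hao) (neg_mem ha) (by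
      rw [map_neg]; exact eq_neg_of_add_eq_zero_right h1')
    refine ⟨a, hao, ha, ?_, ?_⟩
    · simpa [hr0] using h1'
    · simp [hr0]
  · exact hw (q + 2) 2 (by omega) le_rfl h2
      (fun m' hm' => by rw [show m' = 1 by omega, h1]) x hxo hx hDx


end PDCDGA
end

section
/- If n is even and k = n/2 + 1, then the bilinear form Γ ⊗ Γ → k, γ ⊗ γ' ↦ ε(γγ') is non-degenerate on Γ = ⟨γ_1,…,γ_l⟩ ⊆ A^{n/2}. -/
namespace PDCDGA

variable {k : Type} [Field k]

lemma orphan_of_homog {k A : Type} [Field k] [Ring A] [Algebra k A]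
    (𝒜 : ℕ → Submodule k A) [GradedRing 𝒜]
    (d : A →ₗ[k] A) (n : ℕ) (ε : A →ₗ[k] k) (hor : IsOrientation 𝒜 d n ε)
    (i j : ℕ) (hij : i + j = n) (a : A) (ha : a ∈ 𝒜 i)
    (h : ∀ x ∈ 𝒜 j, ε (a * x) = 0) : a ∈ Orphans ε := by
  rw [mem_orphans]
  intro b
  induction b using DirectSum.Decomposition.inductionOn 𝒜 with
  | zero => simp
  | @homogeneous t b =>
    by_cases ht : t = j
    · subst ht
      exact h _ b.2
    · exact hor.homog (i + t) (by omega) _ (SetLike.mul_mem_graded ha b.2)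
  | add b c hb hc => rw [mul_add, map_add, hb, hc, add_zero]

lemma eps_swap {k A : Type} [Field k] [Ring A] [Algebra k A]
    (𝒜 : ℕ → Submodule k A) (ε : A →ₗ[k] k) (hgc : GradedComm 𝒜)
    {i j : ℕ} {a b : A} (ha : a ∈ 𝒜 i) (hb : b ∈ 𝒜 j) (h : ε (a * b) = 0) :
    ε (b * a) = 0 := by
  rw [hgc.mul_comm j i b a hb ha, map_smul, h, smul_zero]

/-- if `n` is even and `k = n/2 + 1` (i.e. `n = 2q + 2` with
`k = q + 2`), the bilinear form `Γ ⊗ Γ → k`, `γ ⊗ γ' ↦ ε(γγ')` is non-degenerate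
on `Γ = ⟨γ₁,…,γ_l⟩ ⊆ A^{n/2}`. -/
theorem gamma_pairing_nondegenerate {k A : Type} [Field k] [Ring A] [Algebra k A]
    (𝒜 : ℕ → Submodule k A) [GradedRing 𝒜]
    (d : A →ₗ[k] A) (n : ℕ) (ε : A →ₗ[k] k)
    (hgc : GradedComm 𝒜) (hd : IsDifferential 𝒜 d)
    (hconn : ∀ a ∈ 𝒜 0, ∃ r : k, a = r • (1 : A))
    (hft : ∀ i : ℕ, FiniteDimensional k (𝒜 i))
    (hor : IsOrientation 𝒜 d n ε) (hpd : CohomologyPD 𝒜 d n ε)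
    (q l : ℕ) (hne : n = 2 * q + 2)
    (α γ : Fin l → A)
    (hαm : ∀ i, α i ∈ 𝒜 (q + 2)) (hαz : ∀ i, d (α i) = 0) (hαo : ∀ i, α i ∈ Orphans ε)
    (hspan : ∀ a : A, a ∈ Orphans ε → a ∈ 𝒜 (q + 2) → d a = 0 →
      ∃ (b : A) (cf : Fin l → k), b ∈ Orphans ε ∧ b ∈ 𝒜 (q + 1) ∧ a = d b + ∑ i, cf i • α i)
    (hind : ∀ (cf : Fin l → k) (b : A), b ∈ Orphans ε → b ∈ 𝒜 (q + 1) →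
      (∑ i, cf i • α i) = d b → ∀ i, cf i = 0)
    (hγm : ∀ i, γ i ∈ 𝒜 (q + 1)) (hγd : ∀ i, d (γ i) = α i)
    (hγperp : ∀ (i : Fin l) (z : A), d z = 0 → ε (γ i * z) = 0) :
    ∀ g ∈ Submodule.span k (Set.range γ), g ≠ 0 →
      ∃ g' ∈ Submodule.span k (Set.range γ), ε (g * g') ≠ 0 := by
  intro g hg hg0
  by_contra hcon
  push Not at hcon
  apply hg0
  have hspm : Submodule.span k (Set.range γ) ≤ 𝒜 (q + 1) := by
    rw [Submodule.span_le]
    rintro _ ⟨i, rfl⟩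
    exact hγm i
  have hgm : g ∈ 𝒜 (q + 1) := hspm hg
  obtain ⟨c, hc⟩ := (Submodule.mem_span_range_iff_exists_fun k).1 hg
  have hgz : ∀ z, d z = 0 → ε (g * z) = 0 := by
    intro z hz
    rw [← hc, Finset.sum_mul, map_sum]
    refine Finset.sum_eq_zero fun i _ => ?_
    rw [smul_mul_assoc, map_smul, hγperp i z hz, smul_zero]
  have hdsum : ∀ e : Fin l → k, d (∑ i, e i • γ i) = ∑ i, e i • α i := by
    intro e
    simp [map_sum, hγd]
  -- `g` annihilates everything whose differential is an orphan
  have hperp : ∀ x ∈ 𝒜 (q + 1), d x ∈ Orphans ε → ε (g * x) = 0 := by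
    intro x hx hdx
    obtain ⟨b, e, hbo, hbm, hb⟩ := hspan (d x) hdx (hd.grade _ _ hx) (hd.d_sq x)
    have hz : d (x - b - ∑ i, e i • γ i) = 0 := by
      rw [map_sub, map_sub, hdsum, hb]; abel
    have h1 := hgz _ hz
    have h2 : ε (g * b) = 0 := eps_swap 𝒜 ε hgc hbm hgm ((mem_orphans ε b).1 hbo g)
    have h3 : ε (g * ∑ i, e i • γ i) = 0 :=
      hcon _ ((Submodule.mem_span_range_iff_exists_fun k).2 ⟨e, rfl⟩)
    rw [mul_sub, mul_sub, map_sub, map_sub, h2, h3] at h1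
    simpa using h1
  -- functionals on the middle degree
  let T : A →ₗ[k] Module.Dual k (𝒜 (q + 1)) :=
    ((LinearMap.mul k A).compr₂ ε).compl₂ (𝒜 (q + 1)).subtype
  have hT : ∀ a (x : 𝒜 (q + 1)), T a x = ε (a * x) := fun a x => rfl
  haveI := hft (q + 1)
  let W : Submodule k (Module.Dual k (𝒜 (q + 1))) := (𝒜 q).map (T ∘ₗ d)
  have hmem : T g ∈ W := by
    rw [← Subspace.dualCoannihilator_dualAnnihilator_eq (W := W),
      Submodule.mem_dualAnnihilator]
    intro x hx
    rw [Submodule.mem_dualCoannihilator] at hx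
    rw [hT]
    refine hperp x x.2 ?_
    refine orphan_of_homog 𝒜 d n ε hor (q + 2) q (by omega) _ (hd.grade _ _ x.2) ?_
    intro y hy
    have h1 : ε (d y * x) = 0 := hx (T (d y)) ⟨y, hy, rfl⟩
    have h2 := eps_swap 𝒜 ε hgc (hd.grade _ _ hy) x.2 h1
    have h3 := hor.eps_d ((x : A) * y)
    rw [hd.leibniz _ _ _ x.2, map_add, map_smul, h2, smul_zero, add_zero] at h3
    exact h3
  obtain ⟨y, hy, hyg⟩ := hmem
  have hbm : g - d y ∈ 𝒜 (q + 1) := sub_mem hgm (hd.grade _ _ hy)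
  have hbo : g - d y ∈ Orphans ε := by
    refine orphan_of_homog 𝒜 d n ε hor (q + 1) (q + 1) (by omega) _ hbm ?_
    intro x hx
    have h1 : T (d y) ⟨x, hx⟩ = T g ⟨x, hx⟩ := by rw [← hyg]; rfl
    rw [hT, hT] at h1
    rw [sub_mul, map_sub, sub_eq_zero]
    exact h1.symm
  have hc0 := hind c (g - d y) hbo hbm (by
    rw [map_sub, hd.d_sq, sub_zero, ← hdsum, hc])
  rw [← hc]
  exact Finset.sum_eq_zero fun i _ => by rw [hc0 i, zero_smul]

end PDCDGA
end

section
/- If n/2 ≤ i ≤ k − 3, then Ô^i = O^i: the orphan ideals of A and Â agree in these degrees. -/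
namespace PDCDGA

variable {k : Type} [Field k]

lemma list_prod_mem_grade {B : Type} [Ring B] [Algebra k B] (ℬ : ℕ → Submodule k B)
    [GradedRing ℬ] {l : ℕ} (r : ℕ) (c : Fin l → B) (hc : ∀ i, c i ∈ ℬ r) (s : Fin l → ℕ)
    (L : List (Fin l)) :
    ∃ m : ℕ, (L.map fun i => c i ^ s i).prod ∈ ℬ m ∧
      (r ≤ m ∨ (m = 0 ∧ (L.map fun i => c i ^ s i).prod = 1)) := by
  induction L with
  | nil => exact ⟨0, by simpa using SetLike.one_mem_graded ℬ, Or.inr ⟨rfl, by simp⟩⟩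
  | cons a L ih =>
    obtain ⟨m, hm, h⟩ := ih
    refine ⟨s a • r + m, ?_, ?_⟩
    · rw [List.map_cons, List.prod_cons]
      exact SetLike.mul_mem_graded (SetLike.pow_mem_graded (s a) (hc a)) hm
    · rcases Nat.eq_zero_or_pos (s a) with h0 | h0
      · rcases h with h | ⟨h, h'⟩
        · left; omega
        · right; simp [h0, h, h']
      · left
        have : r ≤ s a * r := Nat.le_mul_of_pos_left r h0
        rw [smul_eq_mul]; omega

lemma monomial_mem_grade {B : Type} [Ring B] [Algebra k B] (ℬ : ℕ → Submodule k B)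
    [GradedRing ℬ] {l : ℕ} (q : ℕ) (c w : Fin l → B) (hc : ∀ i, c i ∈ ℬ (q + 1))
    (hw : ∀ i, w i ∈ ℬ q) (μ : (Fin l → ℕ) × (Fin l → ℕ)) :
    ∃ m : ℕ, monomial c w μ ∈ ℬ m ∧ (q ≤ m ∨ monomial c w μ = 1) := by
  obtain ⟨m, hm, h⟩ := list_prod_mem_grade ℬ (q + 1) c hc μ.1 (List.finRange l)
  obtain ⟨p, hp, h'⟩ := list_prod_mem_grade ℬ q w hw μ.2 (List.finRange l)
  refine ⟨m + p, SetLike.mul_mem_graded hm hp, ?_⟩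
  rcases h with h | ⟨-, h⟩
  · left; omega
  · rcases h' with h' | ⟨-, h'⟩
    · left; omega
    · right; unfold monomial; rw [h, h', one_mul]

lemma low_degree_mem {A B : Type} [Ring A] [Algebra k A] [Ring B] [Algebra k B]
    (𝒜 : ℕ → Submodule k A) [GradedRing 𝒜] (ℬ : ℕ → Submodule k B) [GradedRing ℬ]
    (q l : ℕ) (j : A →ₐ[k] B) (hjgr : ∀ i : ℕ, ∀ a ∈ 𝒜 i, j a ∈ ℬ i)
    (c w : Fin l → B) (hcm : ∀ i, c i ∈ ℬ (q + 1)) (hwm : ∀ i, w i ∈ ℬ q)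
    (hfree : ∀ x : B, ∃! f : MonIdx q l →₀ A,
      (f.sum fun μ a => j a * monomial c w μ.1) = x)
    (m : ℕ) (hm : m < q) (x : B) (hx : x ∈ ℬ m) : ∃ a ∈ 𝒜 m, x = j a := by
  have key : ∀ a : A, (DirectSum.decompose ℬ (j a) m : B) ∈ (𝒜 m).map j.toLinearMap := by
    intro a
    induction a using DirectSum.Decomposition.inductionOn 𝒜 with
    | zero => simp
    | @homogeneous p a =>
      by_cases hpm : p = m
      · subst hpm
        rw [DirectSum.decompose_of_mem_same ℬ (hjgr p a a.2)]
        exact ⟨a, a.2, rfl⟩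
      · rw [DirectSum.decompose_of_mem_ne ℬ (hjgr p a a.2) hpm]
        exact Submodule.zero_mem _
    | add a b ha hb =>
      rw [map_add, DirectSum.decompose_add, DirectSum.add_apply, Submodule.coe_add]
      exact Submodule.add_mem _ ha hb
  obtain ⟨f, hf, -⟩ := hfree x
  have hmem : x ∈ (𝒜 m).map j.toLinearMap := by
    rw [← DirectSum.decompose_of_mem_same ℬ hx, ← hf]
    simp only [Finsupp.sum]
    rw [DirectSum.decompose_sum, DFinsupp.finset_sum_apply, AddSubmonoidClass.coe_finset_sum]
    refine Submodule.sum_mem _ fun μ _ => ?_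
    obtain ⟨p, hp, h⟩ := monomial_mem_grade ℬ q c w hcm hwm μ.1
    rcases h with h | h
    · rw [DirectSum.coe_decompose_mul_of_right_mem_of_not_le ℬ hp (by omega)]
      exact Submodule.zero_mem _
    · rw [h, mul_one]; exact key _
  obtain ⟨a, ha, h⟩ := hmem
  exact ⟨a, ha, h.symm⟩

/-- if `n/2 ≤ i ≤ k − 3` (with `k = q + 2 ≥ n/2 + 2`), then
`Ôⁱ = Oⁱ`: under the identification `Âⁱ = Aⁱ`, the orphan ideals of `A` and `Â`
agree in these degrees. -/
theorem orphans_agree_in_middle_range {k A B : Type} [Field k] [Ring A] [Algebra k A] [Ring B] [Algebra k B]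
    (𝒜 : ℕ → Submodule k A) [GradedRing 𝒜] (ℬ : ℕ → Submodule k B) [GradedRing ℬ]
    (d : A →ₗ[k] A) (D : B →ₗ[k] B) (n q l : ℕ)
    (ε : A →ₗ[k] k) (E : B →ₗ[k] k)
    (hgcA : GradedComm 𝒜) (hdA : IsDifferential 𝒜 d)
    (hgcB : GradedComm ℬ) (hdB : IsDifferential ℬ D)
    (hft : ∀ i : ℕ, FiniteDimensional k (𝒜 i))
    (hconn : ∀ a ∈ 𝒜 0, ∃ r : k, a = r • (1 : A))
    (h1 : 𝒜 1 = ⊥) (h2 : ∀ a ∈ 𝒜 2, d a = 0)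
    (hn : 7 ≤ n) (hk : n + 2 ≤ 2 * (q + 2))
    (hor : IsOrientation 𝒜 d n ε) (hpd : CohomologyPD 𝒜 d n ε)
    (α γ : Fin l → A)
    (hαm : ∀ i, α i ∈ 𝒜 (q + 2)) (hαz : ∀ i, d (α i) = 0) (hαo : ∀ i, α i ∈ Orphans ε)
    (hspan : ∀ a : A, a ∈ Orphans ε → a ∈ 𝒜 (q + 2) → d a = 0 →
      ∃ (b : A) (cf : Fin l → k), b ∈ Orphans ε ∧ b ∈ 𝒜 (q + 1) ∧ a = d b + ∑ i, cf i • α i)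
    (hind : ∀ (cf : Fin l → k) (b : A), b ∈ Orphans ε → b ∈ 𝒜 (q + 1) →
      (∑ i, cf i • α i) = d b → ∀ i, cf i = 0)
    (hγm : ∀ i, γ i ∈ 𝒜 (q + 1)) (hγd : ∀ i, d (γ i) = α i)
    (hγperp : ∀ (i : Fin l) (z : A), d z = 0 → ε (γ i * z) = 0)
    (T Z : Submodule k A)
    (hT : IsCompl T (LinearMap.range d)) (hγT : ∀ i, γ i ∈ T)
    (hZo : Z ≤ Orphans ε)
    (hZdisj : Z ⊓ (Orphans ε ⊓ LinearMap.range d) = ⊥)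
    (hZsup : Z ⊔ (Orphans ε ⊓ LinearMap.range d) = Orphans ε)
    (hZT : Z ≤ T)
    (hZgr : ∀ z ∈ Z, ∀ i : ℕ, ((DirectSum.decompose 𝒜 z i : 𝒜 i) : A) ∈ Z)
    (j : A →ₐ[k] B) (hjgr : ∀ i : ℕ, ∀ a ∈ 𝒜 i, j a ∈ ℬ i)
    (hjch : ∀ a : A, D (j a) = j (d a))
    (c w : Fin l → B) (hcm : ∀ i, c i ∈ ℬ (q + 1)) (hwm : ∀ i, w i ∈ ℬ q)
    (hDc : ∀ i, D (c i) = j (α i)) (hDw : ∀ i, D (w i) = c i - j (γ i))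
    (hcase : CharZero k ∨ Odd (q + 2))
    (hfree : ∀ x : B, ∃! f : MonIdx q l →₀ A,
      (f.sum fun μ a => j a * monomial c w μ.1) = x)
    (hEj : ∀ a : A, E (j a) = ε a)
    (hEwd : ∀ (i : Fin l) (ξ : A), E (w i * j (d ξ)) = ((-1 : k) ^ (q + 2)) * ε (γ i * ξ))
    (hEcc : ∀ i i' : Fin l, E (c i * c i') = - ε (γ i * γ i'))
    (hEw : ∀ i : Fin l, E (w i) = 0)
    (hEwT : ∀ (i : Fin l) (t : A), t ∈ T → E (w i * j t) = 0)
    (hEc : ∀ i : Fin l, E (c i) = 0)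
    (hEcj : ∀ (i : Fin l) (ξ : A), E (c i * j ξ) = 0)
    (hEccj : ∀ (i i' : Fin l) (ξ : A), E (c i * c i' * j ξ) = 0)
    (hEcw : ∀ i i' : Fin l, E (c i * w i') = 0)
    (hEcwj : ∀ (i i' : Fin l) (ξ : A), E (c i * w i' * j ξ) = 0)
    (hEww : ∀ i i' : Fin l, E (w i * w i') = 0)
    (hEwwj : ∀ (i i' : Fin l) (ξ : A), E (w i * w i' * j ξ) = 0)
    (hEhom : ∀ m : ℕ, m ≠ n → ∀ x ∈ ℬ m, E x = 0)
    (hk2 : n + 4 ≤ 2 * (q + 2)) :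
    ∀ i : ℕ, n ≤ 2 * i → i + 3 ≤ q + 2 →
      (∀ a ∈ 𝒜 i, (a ∈ Orphans ε ↔ j a ∈ Orphans E)) ∧
      (∀ x ∈ ℬ i, x ∈ Orphans E → ∃ a : A, a ∈ 𝒜 i ∧ a ∈ Orphans ε ∧ x = j a) := by
  intro i hi hiq
  have low := low_degree_mem 𝒜 ℬ q l j hjgr c w hcm hwm hfree
  have back : ∀ a : A, j a ∈ Orphans E → a ∈ Orphans ε := by
    intro a ha
    rw [mem_orphans] at ha ⊢
    intro b
    rw [← hEj, map_mul]
    exact ha _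
  refine ⟨fun a ha => ⟨fun hao => ?_, back a⟩, fun x hx hxo => ?_⟩
  · rw [mem_orphans] at hao ⊢
    intro x
    induction x using DirectSum.Decomposition.inductionOn ℬ with
    | zero => simp
    | @homogeneous p x =>
      by_cases hp : i + p = n
      · obtain ⟨b, -, hb⟩ := low p (by omega) x x.2
        rw [hb, ← map_mul, hEj, hao]
      · exact hEhom _ hp _ (SetLike.mul_mem_graded (hjgr i a ha) x.2)
    | add x y hx hy => rw [mul_add, map_add, hx, hy, add_zero]
  · obtain ⟨a, ha, rfl⟩ := low i (by omega) x hx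
    exact ⟨a, ha, back a hxo, rfl⟩

end PDCDGA
end

section
/- If k ≥ n/2 + 2, then each generator c_i lies in the orphan ideal of Â: ⟨c_1,…,c_l⟩ ⊆ Ô^{k-1}. -/
namespace PDCDGA

variable {k : Type} [Field k]

/-- if `k ≥ n/2 + 2` (with `k = q + 2`), then each generator `c_i`
lies in the orphan ideal of `Â`. -/
theorem c_generators_are_orphans {k A B : Type} [Field k] [Ring A] [Algebra k A] [Ring B] [Algebra k B]
    (𝒜 : ℕ → Submodule k A) [GradedRing 𝒜] (ℬ : ℕ → Submodule k B) [GradedRing ℬ]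
    (d : A →ₗ[k] A) (D : B →ₗ[k] B) (n q l : ℕ)
    (ε : A →ₗ[k] k) (E : B →ₗ[k] k)
    (hgcA : GradedComm 𝒜) (hdA : IsDifferential 𝒜 d)
    (hgcB : GradedComm ℬ) (hdB : IsDifferential ℬ D)
    (hft : ∀ i : ℕ, FiniteDimensional k (𝒜 i))
    (hconn : ∀ a ∈ 𝒜 0, ∃ r : k, a = r • (1 : A))
    (h1 : 𝒜 1 = ⊥) (h2 : ∀ a ∈ 𝒜 2, d a = 0)
    (hn : 7 ≤ n) (hk : n + 2 ≤ 2 * (q + 2))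
    (hor : IsOrientation 𝒜 d n ε) (hpd : CohomologyPD 𝒜 d n ε)
    (α γ : Fin l → A)
    (hαm : ∀ i, α i ∈ 𝒜 (q + 2)) (hαz : ∀ i, d (α i) = 0) (hαo : ∀ i, α i ∈ Orphans ε)
    (hspan : ∀ a : A, a ∈ Orphans ε → a ∈ 𝒜 (q + 2) → d a = 0 →
      ∃ (b : A) (cf : Fin l → k), b ∈ Orphans ε ∧ b ∈ 𝒜 (q + 1) ∧ a = d b + ∑ i, cf i • α i)
    (hind : ∀ (cf : Fin l → k) (b : A), b ∈ Orphans ε → b ∈ 𝒜 (q + 1) →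
      (∑ i, cf i • α i) = d b → ∀ i, cf i = 0)
    (hγm : ∀ i, γ i ∈ 𝒜 (q + 1)) (hγd : ∀ i, d (γ i) = α i)
    (hγperp : ∀ (i : Fin l) (z : A), d z = 0 → ε (γ i * z) = 0)
    (T Z : Submodule k A)
    (hT : IsCompl T (LinearMap.range d)) (hγT : ∀ i, γ i ∈ T)
    (hZo : Z ≤ Orphans ε)
    (hZdisj : Z ⊓ (Orphans ε ⊓ LinearMap.range d) = ⊥)
    (hZsup : Z ⊔ (Orphans ε ⊓ LinearMap.range d) = Orphans ε)
    (hZT : Z ≤ T)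
    (hZgr : ∀ z ∈ Z, ∀ i : ℕ, ((DirectSum.decompose 𝒜 z i : 𝒜 i) : A) ∈ Z)
    (j : A →ₐ[k] B) (hjgr : ∀ i : ℕ, ∀ a ∈ 𝒜 i, j a ∈ ℬ i)
    (hjch : ∀ a : A, D (j a) = j (d a))
    (c w : Fin l → B) (hcm : ∀ i, c i ∈ ℬ (q + 1)) (hwm : ∀ i, w i ∈ ℬ q)
    (hDc : ∀ i, D (c i) = j (α i)) (hDw : ∀ i, D (w i) = c i - j (γ i))
    (hcase : CharZero k ∨ Odd (q + 2))
    (hfree : ∀ x : B, ∃! f : MonIdx q l →₀ A,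
      (f.sum fun μ a => j a * monomial c w μ.1) = x)
    (hEj : ∀ a : A, E (j a) = ε a)
    (hEwd : ∀ (i : Fin l) (ξ : A), E (w i * j (d ξ)) = ((-1 : k) ^ (q + 2)) * ε (γ i * ξ))
    (hEcc : ∀ i i' : Fin l, E (c i * c i') = - ε (γ i * γ i'))
    (hEw : ∀ i : Fin l, E (w i) = 0)
    (hEwT : ∀ (i : Fin l) (t : A), t ∈ T → E (w i * j t) = 0)
    (hEc : ∀ i : Fin l, E (c i) = 0)
    (hEcj : ∀ (i : Fin l) (ξ : A), E (c i * j ξ) = 0)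
    (hEccj : ∀ (i i' : Fin l) (ξ : A), E (c i * c i' * j ξ) = 0)
    (hEcw : ∀ i i' : Fin l, E (c i * w i') = 0)
    (hEcwj : ∀ (i i' : Fin l) (ξ : A), E (c i * w i' * j ξ) = 0)
    (hEww : ∀ i i' : Fin l, E (w i * w i') = 0)
    (hEwwj : ∀ (i i' : Fin l) (ξ : A), E (w i * w i' * j ξ) = 0)
    (hEhom : ∀ m : ℕ, m ≠ n → ∀ x ∈ ℬ m, E x = 0)
    (hk2 : n + 4 ≤ 2 * (q + 2)) :
    ∀ i : Fin l, c i ∈ Orphans E := by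
  have hmono : ∀ μ : (Fin l → ℕ) × (Fin l → ℕ),
      monomial c w μ = 1 ∨ ∃ m, q ≤ m ∧ monomial c w μ ∈ ℬ m := by
    intro μ
    by_cases h0 : (∀ i, μ.1 i = 0) ∧ (∀ i, μ.2 i = 0)
    · left
      simp [monomial, h0.1, h0.2]
    · right
      refine ⟨((List.finRange l).map fun i => μ.1 i • (q + 1)).sum +
        ((List.finRange l).map fun i => μ.2 i • q).sum, ?_, ?_⟩
      · by_cases h1 : ∀ i, μ.1 i = 0
        · have h2 : ¬ ∀ i, μ.2 i = 0 := fun h => h0 ⟨h1, h⟩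
          push Not at h2
          obtain ⟨i, hi⟩ := h2
          have hle : μ.2 i • q ≤ ((List.finRange l).map fun i => μ.2 i • q).sum :=
            List.single_le_sum (by simp) _ (List.mem_map.2 ⟨i, List.mem_finRange i, rfl⟩)
          have : q ≤ μ.2 i • q := Nat.le_mul_of_pos_left q (Nat.pos_of_ne_zero hi)
          omega
        · push Not at h1
          obtain ⟨i, hi⟩ := h1
          have hle : μ.1 i • (q + 1) ≤ ((List.finRange l).map fun i => μ.1 i • (q + 1)).sum :=
            List.single_le_sum (by simp) _ (List.mem_map.2 ⟨i, List.mem_finRange i, rfl⟩)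
          have : q + 1 ≤ μ.1 i • (q + 1) :=
            Nat.le_mul_of_pos_left (q + 1) (Nat.pos_of_ne_zero hi)
          omega
      · exact SetLike.mul_mem_graded
          (SetLike.list_prod_map_mem_graded _ _ _ fun i _ => SetLike.pow_mem_graded _ (hcm i))
          (SetLike.list_prod_map_mem_graded _ _ _ fun i _ => SetLike.pow_mem_graded _ (hwm i))
  intro i
  rw [mem_orphans]
  intro x
  obtain ⟨f, hf, -⟩ := hfree x
  rw [← hf, Finsupp.sum, Finset.mul_sum, map_sum]
  refine Finset.sum_eq_zero fun μ _ => ?_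
  rcases hmono μ.1 with h | ⟨m, hm, hmem⟩
  · rw [h, mul_one]
    exact hEcj i _
  · refine DirectSum.Decomposition.inductionOn 𝒜
      (motive := fun a => E (c i * (j a * monomial c w μ.1)) = 0) ?_ ?_ ?_ (f μ)
    · simp
    · intro p a
      refine hEhom (q + 1 + (p + m)) (by omega) _ ?_
      exact SetLike.mul_mem_graded (hcm i) (SetLike.mul_mem_graded (hjgr p a a.2) hmem)
    · intro a b ha hb
      rw [map_add, add_mul, mul_add, map_add, ha, hb, add_zero]

end PDCDGA
end
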